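/- Let (G_n) be a sequence of connected d-regular simple graphs on n vertices with d = d(n) → ∞ and ε = ε(n) ∈ (0,1) with ε(n)·log d → ∞, satisfying properties P1, P2, P3 and P4. Let t_{−ε} = (1−ε)·n·ln d. Then there exists a constant c > 0 such that, for any sequence of starting vertices, the probability that the subgraph of G_n induced by the vertices not visited by the lazy random walk during the time interval [1, 2t_{−ε}] contains a connected component with at least exp(c·d^{ε/2}) vertices tends to 1 as n → ∞. -/

import Mathlib

open Finset Filter

noncomputable section
open scoped Classical

variable {V : Type*} [Fintype V] [DecidableEq V]

/-- Transition matrix of the simple random walk on a `d`-regular graph `G`: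
from `u` the walk moves to a uniformly random neighbour. -/
def simpleStep (G : SimpleGraph V) (d : ℕ) : Matrix V V ℝ :=
  Matrix.of fun u v => if G.Adj u v then ((d : ℝ))⁻¹ else 0

/-- Transition matrix of the lazy random walk `M = (1/2)(I + A/d)`. -/
def lazyStep (G : SimpleGraph V) (d : ℕ) : Matrix V V ℝ :=
  Matrix.of fun u v =>
    (if u = v then (2 : ℝ)⁻¹ else 0) + (2 : ℝ)⁻¹ * (if G.Adj u v then ((d : ℝ))⁻¹ else 0)

/-- Probability that the first `t` steps of the Markov chain with transition
matrix `M` started at `u` form a trajectory satisfying `E`:  the sum, over all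
paths realizing the event, of the product of the transition probabilities. -/
def walkProb (M : Matrix V V ℝ) (u : V) (t : ℕ)
    (E : (Fin (t + 1) → V) → Prop) : ℝ :=
  ∑ p : Fin (t + 1) → V,
    if p 0 = u ∧ E p then ∏ i : Fin t, M (p i.castSucc) (p i.succ) else 0

/-- The mixing time `T = min { t ≥ 1 : |M^t x y - 1/n| ≤ n⁻³ for all x,y }`. -/
def mixingTime (G : SimpleGraph V) (d : ℕ) : ℕ :=
  sInf {T : ℕ | 1 ≤ T ∧ ∀ x y : V,
    |((lazyStep G d) ^ T) x y - ((Fintype.card V : ℝ))⁻¹| ≤ (((Fintype.card V : ℝ)) ^ 3)⁻¹}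

/-- Property P1: the second largest eigenvalue of the lazy walk matrix is at
most `1 - g`, stated via the Rayleigh quotient on the orthogonal complement of
the constant (top) eigenvector. -/
def SpectralGapLB (G : SimpleGraph V) (d : ℕ) (g : ℝ) : Prop :=
  ∀ x : V → ℝ, (∑ v : V, x v) = 0 →
    (∑ u : V, ∑ v : V, x u * lazyStep G d u v * x v) ≤ (1 - g) * ∑ v : V, x v ^ 2

/-- Property P3 with constant `ρ₂`: for vertices `u,v` at distance at most
`d^ε`, the number of neighbours `w` of `v` with `dist w u ≤ dist u v` is at
most `ρ₂ · dist u v`. -/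
def PropP3 (G : SimpleGraph V) (d : ℕ) (ε ρ₂ : ℝ) : Prop :=
  ∀ u v : V, (G.dist u v : ℝ) ≤ (d : ℝ) ^ ε →
    (((univ : Finset V).filter fun w => G.Adj v w ∧ G.dist w u ≤ G.dist u v).card : ℝ) ≤
      ρ₂ * (G.dist u v : ℝ)

/-- The number of edges of `G` with both endpoints in `S`. -/
def edgesInside (G : SimpleGraph V) (S : Finset V) : ℕ :=
  ((S ×ˢ S).filter fun p => G.Adj p.1 p.2).card / 2

/-- The set of vertices of `G` not visited by the trajectory `p` at any step
`s` with `t₀ ≤ s` contains a connected (in the induced subgraph) subset of at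
least `K` vertices; equivalently, the subgraph induced by this vacant set has a
connected component with at least `K` vertices. -/
def bigVacantComponent (G : SimpleGraph V) {t : ℕ} (p : Fin (t + 1) → V)
    (t₀ : ℕ) (K : ℝ) : Prop :=
  ∃ S : Finset V, (∀ v ∈ S, ∀ s : Fin (t + 1), t₀ ≤ (s : ℕ) → p s ≠ v) ∧
    (G.induce (S : Set V)).Connected ∧ K ≤ (S.card : ℝ)

/-!
Let `W` be the set of vertices that the walk avoids from its mixing time `T` to time `t + T`.
Property P3 bounds the heat kernel of the simple walk, and together with the spectral gap this
forces the Dirichlet form on functions vanishing on a set `S` of at most four vertices to be at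
least `(1 - o(1)) #S / N` times the squared norm. A matching lower bound on survival comes from
the quadratic form of the killed chain at the indicator function of the complement of `S`. Hence
`P(S ⊆ W) = (1 + o(1)) P ^ #S` with `P = exp (-t / (2 N))` and `d P ≥ d ^ ε`. By Markov's and
Chebyshev's inequalities, with high probability `W` has at most `d ^ (ε / 4) N P (1 + o(1))`
vertices and spans about `N d P ^ 2 / 2` edges, so its average degree exceeds a large multiple of
`d ^ (ε / 2)` even after the vertices visited before time `T` are deleted. It then contains a
connected subgraph whose minimum degree is a large multiple of `r = ⌊d ^ (ε / 2)⌋`. By P3 few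
neighbours of a vertex within distance `r` of a centre are not farther from the centre, so the
spheres of this subgraph grow by a factor `3` up to radius `r`.
-/

section QuadraticForms

open Matrix

variable {α : Type*} [Fintype α] {A : Matrix α α ℝ}

lemma posSemidef_real_iff :
    A.PosSemidef ↔ A.IsSymm ∧ ∀ x : α → ℝ, 0 ≤ x ⬝ᵥ A *ᵥ x := by
  simp only [posSemidef_iff_dotProduct_mulVec, star_trivial, IsHermitian, IsSymm,
    conjTranspose_eq_transpose_of_trivial]

lemma sq_dotProduct_mulVec_le_of_posSemidef (hA : A.PosSemidef) (x y : α → ℝ) :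
    (x ⬝ᵥ A *ᵥ y) ^ 2 ≤ (x ⬝ᵥ A *ᵥ x) * (y ⬝ᵥ A *ᵥ y) := by
  obtain ⟨hsymm, hnonneg⟩ := posSemidef_real_iff.mp hA
  have hB : LinearMap.IsSymm (toBilin' A) :=
    ⟨fun v w => by
      simp only [toBilin'_apply', RingHom.id_apply]
      rw [dotProduct_mulVec, ← mulVec_transpose, hsymm.eq, dotProduct_comm]⟩
  simpa only [toBilin'_apply'] using LinearMap.BilinForm.apply_sq_le_of_symm (toBilin' A)
    (fun v => by simpa only [toBilin'_apply'] using hnonneg v) hB x y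

lemma exists_spectral_weights [DecidableEq α] (hA : A.IsHermitian) (x : α → ℝ) :
    ∃ w : α → ℝ, (∀ i, 0 ≤ w i) ∧
      ∀ t : ℕ, x ⬝ᵥ A ^ t *ᵥ x = ∑ i, w i * hA.eigenvalues i ^ t := by
  set U := (hA.eigenvectorUnitary : Matrix α α ℝ)
  refine ⟨fun i => (Uᵀ *ᵥ x) i ^ 2, fun i => sq_nonneg _, fun t => ?_⟩
  have hpow : A ^ t = U * diagonal (fun i => hA.eigenvalues i ^ t) * Uᵀ := by
    conv_lhs => rw [hA.spectral_theorem, ← map_pow, diagonal_pow,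
      Unitary.conjStarAlgAut_apply]
    rfl
  rw [hpow, ← mulVec_mulVec, ← mulVec_mulVec, dotProduct_mulVec, ← mulVec_transpose]
  simp only [dotProduct, mulVec_diagonal]
  exact sum_congr rfl fun i _ => by ring

lemma dotProduct_pow_mulVec_le [DecidableEq α] (hA : A.PosSemidef) {l : ℝ}
    (hl : ∀ x : α → ℝ, x ⬝ᵥ A *ᵥ x ≤ l * x ⬝ᵥ x) (t : ℕ) (x : α → ℝ) :
    x ⬝ᵥ A ^ t *ᵥ x ≤ l ^ t * x ⬝ᵥ x := by
  have hH := hA.isHermitian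
  obtain ⟨w, hw, hsum⟩ := exists_spectral_weights hH x
  have heig (i : α) : hH.eigenvalues i ≤ l := by
    have hunit : (hH.eigenvectorBasis i).ofLp ⬝ᵥ (hH.eigenvectorBasis i).ofLp = 1 := by
      have h := real_inner_self_eq_norm_sq (hH.eigenvectorBasis i)
      rwa [hH.eigenvectorBasis.norm_eq_one, one_pow,
        EuclideanSpace.inner_eq_star_dotProduct, star_trivial] at h
    have h := hl (hH.eigenvectorBasis i).ofLp
    rwa [hH.mulVec_eigenvectorBasis, dotProduct_smul, hunit, smul_eq_mul, mul_one,
      mul_one] at h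
  have hxx : x ⬝ᵥ x = ∑ i, w i := by simpa using hsum 0
  rw [hsum, hxx, mul_sum]
  refine sum_le_sum fun i _ => ?_
  rw [mul_comm]
  gcongr
  exacts [hw i, hA.eigenvalues_nonneg i, heig i]

-- Jensen's inequality for the spectral measure of `x`.
lemma pow_mul_dotProduct_le [DecidableEq α] (hA : A.PosSemidef) {l : ℝ} (hl : 0 ≤ l)
    {x : α → ℝ} (hx : l * x ⬝ᵥ x ≤ x ⬝ᵥ A *ᵥ x) (t : ℕ) :
    l ^ t * x ⬝ᵥ x ≤ x ⬝ᵥ A ^ t *ᵥ x := by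
  obtain ⟨w, hw, hsum⟩ := exists_spectral_weights hA.isHermitian x
  set e := hA.isHermitian.eigenvalues
  have hxx : x ⬝ᵥ x = ∑ i, w i := by simpa using hsum 0
  have hAx : x ⬝ᵥ A *ᵥ x = ∑ i, w i * e i := by simpa using hsum 1
  rw [hsum]
  rw [hxx, hAx] at hx
  rw [hxx]
  obtain hW | hW := (sum_nonneg fun i _ => hw i : 0 ≤ ∑ i, w i).eq_or_lt
  · rw [← hW, mul_zero]
    exact sum_nonneg fun i _ => mul_nonneg (hw i) (pow_nonneg (hA.eigenvalues_nonneg i) t)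
  · have hjensen := Real.pow_arith_mean_le_arith_mean_pow univ (fun i => w i / ∑ j, w j) e
      (fun i _ => div_nonneg (hw i) hW.le) (by rw [← sum_div, div_self hW.ne'])
      (fun i _ => hA.eigenvalues_nonneg i) t
    simp only [div_mul_eq_mul_div, ← sum_div] at hjensen
    rw [le_div_iff₀ hW] at hjensen
    refine le_trans ?_ hjensen
    gcongr
    rwa [le_div_iff₀ hW]

end QuadraticForms

section StochasticMatrices

open Matrix

variable {α : Type*} [Fintype α] {B : Matrix α α ℝ}

/-- The Dirichlet form `⟨x, (I - B) x⟩` of a transition matrix `B`. -/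
def dirichletForm (B : Matrix α α ℝ) (x : α → ℝ) : ℝ := x ⬝ᵥ x - x ⬝ᵥ B *ᵥ x

/-- The average of a function on a finite type. -/
def mean (x : α → ℝ) : ℝ := (∑ v, x v) / Fintype.card α

lemma sum_sub_mean_smul_one [Nonempty α] (x : α → ℝ) :
    ∑ v, (x - mean x • (1 : α → ℝ)) v = 0 := by
  have hN : (Fintype.card α : ℝ) ≠ 0 := Nat.cast_ne_zero.mpr Fintype.card_ne_zero
  simp [mean, mul_div_cancel₀ _ hN]

lemma dotProduct_sub_mean_smul_one [Nonempty α] (x y : α → ℝ) :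
    (x - mean x • (1 : α → ℝ)) ⬝ᵥ (y - mean y • (1 : α → ℝ)) =
      x ⬝ᵥ y - Fintype.card α * (mean x * mean y) := by
  have hN : (Fintype.card α : ℝ) ≠ 0 := Nat.cast_ne_zero.mpr Fintype.card_ne_zero
  have hsum (z : α → ℝ) : ∑ v, z v = Fintype.card α * mean z := by
    rw [mean, mul_div_cancel₀ _ hN]
  simp only [sub_dotProduct, dotProduct_sub, smul_dotProduct, dotProduct_smul,
    one_dotProduct_one]
  simp only [dotProduct_one, one_dotProduct, hsum, smul_eq_mul]
  ring

/-- The transition matrix of independent uniform sampling. -/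
def averaging (α : Type*) [Fintype α] : Matrix α α ℝ := of fun _ _ => (Fintype.card α : ℝ)⁻¹

lemma dotProduct_sub_averaging_mulVec [Nonempty α] (x : α → ℝ) :
    x ⬝ᵥ (B - averaging α) *ᵥ x = x ⬝ᵥ x - Fintype.card α * mean x ^ 2 - dirichletForm B x := by
  have hN : (Fintype.card α : ℝ) ≠ 0 := Nat.cast_ne_zero.mpr Fintype.card_ne_zero
  have hJ : x ⬝ᵥ averaging α *ᵥ x = Fintype.card α * mean x ^ 2 := by
    simp only [dotProduct, mulVec, averaging, of_apply, ← mul_sum, ← sum_mul, mean]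
    field_simp
  rw [sub_mulVec, dotProduct_sub, hJ, dirichletForm]
  ring

variable [DecidableEq α]

lemma mem_rowStochastic_of_mem_doublyStochastic (hB : B ∈ doublyStochastic ℝ α) :
    B ∈ rowStochastic ℝ α :=
  (mem_doublyStochastic_iff_mem_rowStochastic_and_mem_colStochastic.mp hB).1

lemma one_dotProduct_mulVec_of_mem_doublyStochastic (hB : B ∈ doublyStochastic ℝ α)
    (x : α → ℝ) : 1 ⬝ᵥ B *ᵥ x = 1 ⬝ᵥ x := by
  rw [dotProduct_mulVec, one_vecMul_of_mem_doublyStochastic hB]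

lemma abs_dotProduct_mulVec_le_of_mem_doublyStochastic (hB : B ∈ doublyStochastic ℝ α)
    (x : α → ℝ) : |x ⬝ᵥ B *ᵥ x| ≤ x ⬝ᵥ x := by
  have hrow : ∑ u, ∑ v, B u v * x u ^ 2 = x ⬝ᵥ x := by
    simp only [← sum_mul, sum_row_of_mem_doublyStochastic hB, one_mul, dotProduct, sq]
  have hcol : ∑ u, ∑ v, B u v * x v ^ 2 = x ⬝ᵥ x := by
    rw [sum_comm]
    simp only [← sum_mul, sum_col_of_mem_doublyStochastic hB, one_mul, dotProduct, sq]
  calc |x ⬝ᵥ B *ᵥ x| ≤ ∑ u, ∑ v, |x u * (B u v * x v)| := by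
        simp only [dotProduct, mulVec, mul_sum]
        exact (abs_sum_le_sum_abs _ _).trans (sum_le_sum fun u _ => abs_sum_le_sum_abs _ _)
    _ ≤ ∑ u, ∑ v, (B u v * x u ^ 2 + B u v * x v ^ 2) / 2 := by
        refine sum_le_sum fun u _ => sum_le_sum fun v _ => ?_
        have hBuv : 0 ≤ B u v := nonneg_of_mem_doublyStochastic hB
        rw [abs_mul, abs_mul, abs_of_nonneg hBuv, ← sq_abs (x u), ← sq_abs (x v)]
        nlinarith [mul_nonneg hBuv (sq_nonneg (|x u| - |x v|))]
    _ = x ⬝ᵥ x := by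
        simp only [← sum_div, sum_add_distrib, hrow, hcol, add_self_div_two]

lemma pow_apply_le_of_forall_le (hB : B ∈ rowStochastic ℝ α) {q : ℝ}
    (hq : ∀ u v, B u v ≤ q) {k : ℕ} (hk : k ≠ 0) (u v : α) : (B ^ k) u v ≤ q := by
  obtain ⟨k, rfl⟩ := Nat.exists_eq_succ_of_ne_zero hk
  have hBk : B ^ k ∈ rowStochastic ℝ α := pow_mem hB k
  calc (B ^ (k + 1)) u v = ∑ w, (B ^ k) u w * B w v := by rw [pow_succ, mul_apply]
    _ ≤ ∑ w, (B ^ k) u w * q :=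
        sum_le_sum fun w _ =>
          mul_le_mul_of_nonneg_left (hq w v) (nonneg_of_mem_rowStochastic hBk)
    _ = q := by rw [← sum_mul, sum_row_of_mem_rowStochastic hBk, one_mul]

lemma dirichletForm_eq (B : Matrix α α ℝ) (x : α → ℝ) :
    dirichletForm B x = x ⬝ᵥ (1 - B) *ᵥ x := by
  rw [dirichletForm, sub_mulVec, one_mulVec, dotProduct_sub]

lemma dirichletForm_nonneg (hB : B ∈ doublyStochastic ℝ α) (x : α → ℝ) :
    0 ≤ dirichletForm B x :=
  sub_nonneg.mpr ((le_abs_self _).trans (abs_dotProduct_mulVec_le_of_mem_doublyStochastic hB x))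

lemma posSemidef_one_sub (hB : B ∈ doublyStochastic ℝ α) (hsymm : B.IsSymm) :
    (1 - B).PosSemidef := by
  refine posSemidef_real_iff.mpr ⟨isSymm_one.sub hsymm, fun x => ?_⟩
  rw [← dirichletForm_eq]
  exact dirichletForm_nonneg hB x

lemma dirichletForm_sub_smul_one (hB : B ∈ doublyStochastic ℝ α) (x : α → ℝ) (c : ℝ) :
    dirichletForm B (x - c • 1) = dirichletForm B x := by
  have hone : B *ᵥ 1 = 1 := mulVec_one_of_mem_doublyStochastic hB
  simp only [dirichletForm, mulVec_sub, mulVec_smul, hone, dotProduct_sub, sub_dotProduct,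
    dotProduct_smul, smul_dotProduct, one_dotProduct_mulVec_of_mem_doublyStochastic hB]
  ring

/-- The transition matrix `B` has spectral gap at least `η`, in the form of the Poincaré
inequality for functions of mean zero. -/
def HasSpectralGap (B : Matrix α α ℝ) (η : ℝ) : Prop :=
  ∀ x : α → ℝ, ∑ v, x v = 0 → η * x ⬝ᵥ x ≤ dirichletForm B x

lemma HasSpectralGap.mul_sub_le_dirichletForm [Nonempty α] {η : ℝ} (hgap : HasSpectralGap B η)
    (hB : B ∈ doublyStochastic ℝ α) (x : α → ℝ) :
    η * (x ⬝ᵥ x - Fintype.card α * mean x ^ 2) ≤ dirichletForm B x := by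
  have h := hgap _ (sum_sub_mean_smul_one x)
  rwa [dirichletForm_sub_smul_one hB, dotProduct_sub_mean_smul_one, ← sq] at h

lemma averaging_mul (hB : B ∈ doublyStochastic ℝ α) : averaging α * B = averaging α := by
  ext u v
  simp [averaging, mul_apply, ← mul_sum, sum_col_of_mem_doublyStochastic hB]

lemma mul_averaging (hB : B ∈ rowStochastic ℝ α) : B * averaging α = averaging α := by
  ext u v
  simp [averaging, mul_apply, ← sum_mul, sum_row_of_mem_rowStochastic hB]

lemma averaging_mem_doublyStochastic [Nonempty α] : averaging α ∈ doublyStochastic ℝ α := by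
  rw [mem_doublyStochastic_iff_sum]
  simp [averaging]

lemma sub_averaging_pow [Nonempty α] (hB : B ∈ doublyStochastic ℝ α) {t : ℕ} (ht : t ≠ 0) :
    (B - averaging α) ^ t = B ^ t - averaging α := by
  induction t, Nat.one_le_iff_ne_zero.mpr ht using Nat.le_induction with
  | base => rw [pow_one, pow_one]
  | succ t h1t ih =>
    have hBt : B ^ t ∈ rowStochastic ℝ α :=
      mem_rowStochastic_of_mem_doublyStochastic (pow_mem hB t)
    rw [pow_succ, ih (by omega), sub_mul, mul_sub, mul_sub, averaging_mul hB,
      averaging_mul averaging_mem_doublyStochastic, mul_averaging hBt, pow_succ]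
    abel

lemma posSemidef_sub_averaging [Nonempty α] (hB : B ∈ doublyStochastic ℝ α)
    (hpsd : B.PosSemidef) : (B - averaging α).PosSemidef := by
  refine posSemidef_real_iff.mpr
    ⟨(posSemidef_real_iff.mp hpsd).1.sub (IsSymm.ext fun _ _ => rfl), fun x => ?_⟩
  have h := (posSemidef_real_iff.mp hpsd).2 (x - mean x • 1)
  rw [dotProduct_sub_averaging_mulVec]
  have hD := dirichletForm_sub_smul_one hB x (mean x)
  rw [dirichletForm, dotProduct_sub_mean_smul_one] at hD
  linarith [sq (mean x)]

lemma abs_pow_apply_sub_inv_card_le [Nonempty α] (hB : B ∈ doublyStochastic ℝ α)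
    (hpsd : B.PosSemidef) {g : ℝ} (hg : g ≤ 1) (hgap : HasSpectralGap B g) {t : ℕ}
    (ht : t ≠ 0) (u v : α) : |(B ^ t) u v - (Fintype.card α : ℝ)⁻¹| ≤ (1 - g) ^ t := by
  have hpsd' := posSemidef_sub_averaging hB hpsd
  have hcontract (x : α → ℝ) : x ⬝ᵥ (B - averaging α) *ᵥ x ≤ (1 - g) * x ⬝ᵥ x := by
    rw [dotProduct_sub_averaging_mulVec]
    have hmean : 0 ≤ (1 - g) * (Fintype.card α * mean x ^ 2) :=
      mul_nonneg (sub_nonneg.mpr hg) (by positivity)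
    linarith [hgap.mul_sub_le_dirichletForm hB x]
  have hdiag (w : α) : ((B - averaging α) ^ t) w w ≤ (1 - g) ^ t := by
    simpa using dotProduct_pow_mulVec_le hpsd' hcontract t (Pi.single w 1)
  have hCS := sq_dotProduct_mulVec_le_of_posSemidef (hpsd'.pow t) (Pi.single u 1)
    (Pi.single v 1)
  simp only [mulVec_single_one, single_one_dotProduct, col_apply] at hCS
  have hentry : (B ^ t) u v - (Fintype.card α : ℝ)⁻¹ = ((B - averaging α) ^ t) u v := by
    rw [sub_averaging_pow hB ht]; rfl
  rw [hentry]
  refine abs_le_of_sq_le_sq (hCS.trans ?_) (pow_nonneg (sub_nonneg.mpr hg) t)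
  rw [sq]
  exact mul_le_mul (hdiag u) (hdiag v) (hpsd'.pow t).diag_nonneg
    (pow_nonneg (sub_nonneg.mpr hg) t)

end StochasticMatrices

section VanishingFunctions

open Matrix

variable {α : Type*}

/-- The `0`-`1` vector of a finite set of states. -/
def indicatorVec (S : Finset α) : α → ℝ := fun v => if v ∈ S then 1 else 0

lemma indicatorVec_nonneg (S : Finset α) (v : α) : 0 ≤ indicatorVec S v := by
  unfold indicatorVec; split_ifs <;> norm_num

variable [Fintype α]

lemma indicatorVec_dotProduct (S : Finset α) (x : α → ℝ) :
    indicatorVec S ⬝ᵥ x = ∑ v ∈ S, x v := by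
  simp [indicatorVec, dotProduct]

lemma indicatorVec_dotProduct_self (S : Finset α) :
    indicatorVec S ⬝ᵥ indicatorVec S = #S := by
  rw [indicatorVec_dotProduct]
  simp [indicatorVec]

lemma indicatorVec_dotProduct_mulVec_le {A : Matrix α α ℝ} {q : ℝ} (hA : ∀ u v, A u v ≤ q)
    (S : Finset α) : indicatorVec S ⬝ᵥ A *ᵥ indicatorVec S ≤ (#S : ℝ) ^ 2 * q := by
  calc indicatorVec S ⬝ᵥ A *ᵥ indicatorVec S = ∑ u ∈ S, ∑ v ∈ S, A u v := by
        simp [indicatorVec_dotProduct, mulVec, dotProduct_comm _ (indicatorVec S)]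
    _ ≤ ∑ _u ∈ S, ∑ _v ∈ S, q := sum_le_sum fun u _ => sum_le_sum fun v _ => hA u v
    _ = (#S : ℝ) ^ 2 * q := by simp only [sum_const, nsmul_eq_mul]; ring

lemma dirichletForm_indicatorVec_le {M : Matrix α α ℝ} (hM : ∀ u v, 0 ≤ M u v) {h : ℝ}
    (hdiag : ∀ v, h ≤ M v v) (S : Finset α) : dirichletForm M (indicatorVec S) ≤ (1 - h) * #S := by
  have hloop : #S * h ≤ indicatorVec S ⬝ᵥ M *ᵥ indicatorVec S := by
    calc #S * h = ∑ _v ∈ S, h := by rw [sum_const, nsmul_eq_mul]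
      _ ≤ ∑ v ∈ S, M v v * indicatorVec S v :=
          sum_le_sum fun v hv => by simpa [indicatorVec, hv] using hdiag v
      _ ≤ ∑ v ∈ S, (M *ᵥ indicatorVec S) v :=
          sum_le_sum fun v _ => single_le_sum (f := fun w => M v w * indicatorVec S w)
            (fun w _ => mul_nonneg (hM v w) (indicatorVec_nonneg S w)) (mem_univ v)
      _ = indicatorVec S ⬝ᵥ M *ᵥ indicatorVec S := (indicatorVec_dotProduct _ _).symm
  rw [dirichletForm, indicatorVec_dotProduct_self]
  linarith

variable [DecidableEq α] {B : Matrix α α ℝ}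

lemma mulVec_nonneg_of_mem_doublyStochastic (hB : B ∈ doublyStochastic ℝ α) {f : α → ℝ}
    (hf : ∀ v, 0 ≤ f v) (v : α) : 0 ≤ (B *ᵥ f) v :=
  sum_nonneg fun w _ => mul_nonneg (nonneg_of_mem_doublyStochastic hB) (hf w)

-- The potential `ψ = ∑ i < k, B ^ i f` solves `(1 - B) ψ = f - B ^ k f`; apply Cauchy-Schwarz
-- to the form of `1 - B`.
lemma sq_dotProduct_pow_mulVec_le (hB : B ∈ doublyStochastic ℝ α) (hsymm : B.IsSymm)
    {f g : α → ℝ} (hf : ∀ v, 0 ≤ f v) (hgf : g ⬝ᵥ f = 0) (k : ℕ) :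
    (g ⬝ᵥ B ^ k *ᵥ f) ^ 2 ≤ dirichletForm B g * (f ⬝ᵥ (∑ i ∈ range k, B ^ i) *ᵥ f) := by
  set ψ := (∑ i ∈ range k, B ^ i) *ᵥ f with hψ
  have hpot : (1 - B) *ᵥ ψ = f - B ^ k *ᵥ f := by
    rw [hψ, mulVec_mulVec, mul_neg_geom_sum, sub_mulVec, one_mulVec]
  have hψnonneg (v : α) : 0 ≤ ψ v := by
    rw [hψ, sum_mulVec, Finset.sum_apply]
    exact sum_nonneg fun i _ => mulVec_nonneg_of_mem_doublyStochastic (pow_mem hB i) hf v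
  have hDψ : dirichletForm B ψ ≤ f ⬝ᵥ ψ := by
    rw [dirichletForm_eq, hpot, dotProduct_sub, dotProduct_comm f ψ, sub_le_self_iff]
    exact sum_nonneg fun v _ =>
      mul_nonneg (hψnonneg v) (mulVec_nonneg_of_mem_doublyStochastic (pow_mem hB k) hf v)
  calc (g ⬝ᵥ B ^ k *ᵥ f) ^ 2 = (g ⬝ᵥ (1 - B) *ᵥ ψ) ^ 2 := by
        rw [hpot, dotProduct_sub, hgf, zero_sub, neg_sq]
    _ ≤ dirichletForm B g * dirichletForm B ψ := by
        simpa only [← dirichletForm_eq] using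
          sq_dotProduct_mulVec_le_of_posSemidef (posSemidef_one_sub hB hsymm) g ψ
    _ ≤ dirichletForm B g * (f ⬝ᵥ ψ) :=
        mul_le_mul_of_nonneg_left hDψ (dirichletForm_nonneg hB g)

lemma indicatorVec_dotProduct_geom_sum_mulVec_le (hB : B ∈ doublyStochastic ℝ α) {q : ℝ}
    (hq : ∀ u v, B u v ≤ q) (S : Finset α) (k : ℕ) :
    indicatorVec S ⬝ᵥ (∑ i ∈ range (k + 1), B ^ i) *ᵥ indicatorVec S ≤
      #S * (1 + k * (#S * q)) := by
  have hpow (i : ℕ) : indicatorVec S ⬝ᵥ B ^ (i + 1) *ᵥ indicatorVec S ≤ (#S : ℝ) ^ 2 * q :=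
    indicatorVec_dotProduct_mulVec_le
      (pow_apply_le_of_forall_le (mem_rowStochastic_of_mem_doublyStochastic hB) hq
        i.succ_ne_zero) S
  rw [sum_mulVec, dotProduct_sum, sum_range_succ', pow_zero, one_mulVec,
    indicatorVec_dotProduct_self]
  calc ∑ i ∈ range k, indicatorVec S ⬝ᵥ B ^ (i + 1) *ᵥ indicatorVec S + (#S : ℝ)
      ≤ ∑ _i ∈ range k, (#S : ℝ) ^ 2 * q + #S := by gcongr with i; exact hpow i
    _ = #S * (1 + k * (#S * q)) := by rw [sum_const, card_range, nsmul_eq_mul]; ring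

-- Here `b = B ^ k 1_S`, so that `mean b = #S / N`, and the two sides differ by the inner product
-- of the centred vectors.
lemma sq_dotProduct_pow_indicatorVec_sub_le [Nonempty α] {η : ℝ} (hη : 0 < η)
    (hgap : HasSpectralGap B η) (hB : B ∈ doublyStochastic ℝ α) (hsymm : B.IsSymm)
    (S : Finset α) {k : ℕ} {a : ℝ} (ha : ∀ u v, (B ^ (2 * k)) u v ≤ a) (g : α → ℝ) :
    (g ⬝ᵥ B ^ k *ᵥ indicatorVec S - #S * mean g) ^ 2 ≤
      dirichletForm B g * #S * (#S * a / η) := by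
  have hN : (Fintype.card α : ℝ) ≠ 0 := Nat.cast_ne_zero.mpr Fintype.card_ne_zero
  set b := B ^ k *ᵥ indicatorVec S with hb
  set g' := g - mean g • (1 : α → ℝ)
  set b' := b - mean b • (1 : α → ℝ)
  have hmean : Fintype.card α * mean b = #S := by
    rw [mean, mul_div_cancel₀ _ hN, ← one_dotProduct, hb,
      one_dotProduct_mulVec_of_mem_doublyStochastic (pow_mem hB k), dotProduct_comm,
      indicatorVec_dotProduct]
    simp
  have hinner : g ⬝ᵥ b - #S * mean g = g' ⬝ᵥ b' := by
    rw [dotProduct_sub_mean_smul_one, ← hmean]; ring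
  have hg' : g' ⬝ᵥ g' ≤ dirichletForm B g / η := by
    rw [le_div_iff₀' hη, dotProduct_sub_mean_smul_one, ← sq]
    exact hgap.mul_sub_le_dirichletForm hB g
  have hb' : b' ⬝ᵥ b' ≤ (#S : ℝ) ^ 2 * a := by
    have hbb : b ⬝ᵥ b = indicatorVec S ⬝ᵥ B ^ (2 * k) *ᵥ indicatorVec S := by
      rw [two_mul, pow_add, ← mulVec_mulVec, dotProduct_mulVec, ← mulVec_transpose,
        (hsymm.pow k).eq, dotProduct_comm]
    have hle : b' ⬝ᵥ b' ≤ b ⬝ᵥ b := by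
      rw [dotProduct_sub_mean_smul_one]
      exact sub_le_self _ (mul_nonneg (Nat.cast_nonneg _) (mul_self_nonneg _))
    exact hle.trans (hbb.trans_le (indicatorVec_dotProduct_mulVec_le ha S))
  calc (g ⬝ᵥ b - #S * mean g) ^ 2 = (g' ⬝ᵥ b') ^ 2 := by rw [hinner]
    _ ≤ (g' ⬝ᵥ g') * (b' ⬝ᵥ b') := by
        simpa only [one_mulVec] using sq_dotProduct_mulVec_le_of_posSemidef .one g' b'
    _ ≤ dirichletForm B g / η * ((#S : ℝ) ^ 2 * a) :=
        mul_le_mul hg' hb' (by simpa using dotProduct_star_self_nonneg b')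
          (div_nonneg (dirichletForm_nonneg hB g) hη.le)
    _ = dirichletForm B g * #S * (#S * a / η) := by ring

lemma sq_le_of_sq_le_of_sq_sub_le {x y c κ : ℝ} (hκ : 0 < κ)
    (hx : x ^ 2 ≤ c * (1 + κ)) (hxy : (x - y) ^ 2 ≤ c * κ ^ 2) :
    y ^ 2 ≤ c * (1 + 3 * κ + 2 * κ ^ 2) := by
  have hyoung : κ * y ^ 2 ≤ κ * (1 + κ) * x ^ 2 + (1 + κ) * (x - y) ^ 2 := by
    linarith [sq_nonneg (κ * x + (x - y))]
  have hbound : κ * y ^ 2 ≤ κ * (c * (1 + 3 * κ + 2 * κ ^ 2)) := by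
    calc κ * y ^ 2 ≤ κ * (1 + κ) * x ^ 2 + (1 + κ) * (x - y) ^ 2 := hyoung
      _ ≤ κ * (1 + κ) * (c * (1 + κ)) + (1 + κ) * (c * κ ^ 2) := by gcongr
      _ = κ * (c * (1 + 3 * κ + 2 * κ ^ 2)) := by ring
  exact le_of_mul_le_mul_left hbound hκ

lemma card_mul_sq_mean_le [Nonempty α] {η κ q a : ℝ} {S : Finset α} {k : ℕ} (hη : 0 < η)
    (hgap : HasSpectralGap B η) (hB : B ∈ doublyStochastic ℝ α) (hsymm : B.IsSymm)
    (hq : ∀ u v, B u v ≤ q) (ha : ∀ u v, (B ^ (2 * (k + 1))) u v ≤ a) (hκ : 0 < κ)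
    (hκq : k * (#S * q) ≤ κ) (hκa : #S * a / η ≤ κ ^ 2) {g : α → ℝ} (hg : ∀ v ∈ S, g v = 0) :
    #S * mean g ^ 2 ≤ dirichletForm B g * (1 + 3 * κ + 2 * κ ^ 2) := by
  have he := dirichletForm_nonneg hB g
  obtain rfl | hS := S.eq_empty_or_nonempty
  · simpa using mul_nonneg he (by positivity : 0 ≤ 1 + 3 * κ + 2 * κ ^ 2)
  have hs : (0 : ℝ) < #S := by exact_mod_cast hS.card_pos
  set e := dirichletForm B g
  have hgS : g ⬝ᵥ indicatorVec S = 0 := by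
    rw [dotProduct_comm, indicatorVec_dotProduct]
    exact sum_eq_zero hg
  have hflow : (g ⬝ᵥ B ^ (k + 1) *ᵥ indicatorVec S) ^ 2 ≤ e * #S * (1 + κ) := by
    refine (sq_dotProduct_pow_mulVec_le hB hsymm (indicatorVec_nonneg S) hgS (k + 1)).trans ?_
    rw [mul_assoc]
    refine mul_le_mul_of_nonneg_left
      ((indicatorVec_dotProduct_geom_sum_mulVec_le hB hq S k).trans ?_) he
    gcongr
  have herr : (g ⬝ᵥ B ^ (k + 1) *ᵥ indicatorVec S - #S * mean g) ^ 2 ≤ e * #S * κ ^ 2 :=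
    (sq_dotProduct_pow_indicatorVec_sub_le hη hgap hB hsymm S ha g).trans
      (mul_le_mul_of_nonneg_left hκa (mul_nonneg he hs.le))
  have h := sq_le_of_sq_le_of_sq_sub_le hκ hflow herr
  rw [mul_pow, sq (#S : ℝ), mul_assoc, mul_comm e, mul_assoc] at h
  exact le_of_mul_le_mul_left h hs

theorem dirichletForm_lower_bound_of_forall_mem_eq_zero {η κ q a : ℝ} {S : Finset α} {k : ℕ}
    (hη : 0 < η) (hgap : HasSpectralGap B η) (hB : B ∈ doublyStochastic ℝ α)
    (hsymm : B.IsSymm) (hq : ∀ u v, B u v ≤ q) (ha : ∀ u v, (B ^ (2 * (k + 1))) u v ≤ a)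
    (hκq : k * (#S * q) ≤ κ) (hκN : #S / (η * Fintype.card α) ≤ κ)
    (hκa : #S * a / η ≤ κ ^ 2) {g : α → ℝ} (hg : ∀ v ∈ S, g v = 0) :
    #S / Fintype.card α * (1 - 4 * κ) * g ⬝ᵥ g ≤ dirichletForm B g := by
  have he := dirichletForm_nonneg hB g
  obtain rfl | hS := S.eq_empty_or_nonempty
  · simpa using he
  have : Nonempty α := ⟨hS.choose⟩
  have : (0 : ℝ) < #S := by exact_mod_cast hS.card_pos
  have : (0 : ℝ) < Fintype.card α := by exact_mod_cast Fintype.card_pos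
  have hκ : 0 < κ := lt_of_lt_of_le (by positivity) hκN
  set e := dirichletForm B g
  have hmean := card_mul_sq_mean_le hη hgap hB hsymm hq ha hκ hκq hκa hg
  have hvar : #S / Fintype.card α * (g ⬝ᵥ g - Fintype.card α * mean g ^ 2) ≤ κ * e := by
    calc #S / Fintype.card α * (g ⬝ᵥ g - Fintype.card α * mean g ^ 2)
        ≤ #S / Fintype.card α * (e / η) := by
          gcongr
          rw [le_div_iff₀' hη]
          exact hgap.mul_sub_le_dirichletForm hB g
      _ = #S / (η * Fintype.card α) * e := by field_simp
      _ ≤ κ * e := by gcongr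
  have htotal : #S / Fintype.card α * g ⬝ᵥ g ≤ e * (1 + 4 * κ + 2 * κ ^ 2) := by
    have hcancel : #S / Fintype.card α * (Fintype.card α * mean g ^ 2) = #S * mean g ^ 2 := by
      field_simp
    linarith
  obtain hsmall | hlarge := le_or_gt (1 - 4 * κ) 0
  · refine le_trans (mul_nonpos_of_nonpos_of_nonneg
      (mul_nonpos_of_nonneg_of_nonpos (by positivity) hsmall) ?_) he
    simpa using dotProduct_star_self_nonneg g
  · calc #S / Fintype.card α * (1 - 4 * κ) * g ⬝ᵥ g
        = (1 - 4 * κ) * (#S / Fintype.card α * g ⬝ᵥ g) := by ring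
      _ ≤ (1 - 4 * κ) * (e * (1 + 4 * κ + 2 * κ ^ 2)) := by gcongr
      _ = e - e * (14 * κ ^ 2 + 8 * κ ^ 3) := by ring
      _ ≤ e := sub_le_self _ (by positivity)

end VanishingFunctions

section Walks

open Matrix

variable {M : Matrix V V ℝ}

/-- The probability of the trajectory `p` for the chain `M` started at `u`. -/
def pathWeight (M : Matrix V V ℝ) (u : V) {t : ℕ} (p : Fin (t + 1) → V) : ℝ :=
  if p 0 = u then ∏ i : Fin t, M (p i.castSucc) (p i.succ) else 0

lemma walkProb_eq_sum_pathWeight (M : Matrix V V ℝ) (u : V) (t : ℕ)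
    (E : (Fin (t + 1) → V) → Prop) :
    walkProb M u t E = ∑ p, if E p then pathWeight M u p else 0 := by
  refine sum_congr rfl fun p _ => ?_
  by_cases hstart : p 0 = u <;> by_cases hE : E p <;> simp [pathWeight, hstart, hE]

lemma pathWeight_nonneg {α : Type*} [DecidableEq α] {M : Matrix α α ℝ}
    (hM : ∀ u v, 0 ≤ M u v) (u : α) {t : ℕ} (p : Fin (t + 1) → α) : 0 ≤ pathWeight M u p := by
  unfold pathWeight
  split_ifs
  · exact prod_nonneg fun i _ => hM _ _
  · exact le_rfl

lemma walkProb_mono (hM : ∀ u v, 0 ≤ M u v) (u : V) {t : ℕ} {E F : (Fin (t + 1) → V) → Prop}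
    (hEF : ∀ p, E p → F p) : walkProb M u t E ≤ walkProb M u t F := by
  rw [walkProb_eq_sum_pathWeight, walkProb_eq_sum_pathWeight]
  refine sum_le_sum fun p _ => ?_
  by_cases hE : E p
  · simp [hE, hEF p hE]
  · by_cases hF : F p <;> simp [hE, hF, pathWeight_nonneg hM u p]

lemma walkProb_zero (M : Matrix V V ℝ) (u : V) (E : (Fin (0 + 1) → V) → Prop) :
    walkProb M u 0 E = if E (fun _ => u) then 1 else 0 := by
  unfold walkProb
  rw [sum_eq_single (fun _ => u)]
  · simp
  · rintro p - hp
    refine if_neg fun h => hp (funext fun i => ?_)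
    rw [Fin.fin_one_eq_zero i, h.1]
  · simp

lemma walkProb_succ (M : Matrix V V ℝ) (u : V) (t : ℕ) (E : (Fin (t + 1 + 1) → V) → Prop) :
    walkProb M u (t + 1) E = ∑ v, M u v * walkProb M v t (fun p => E (Fin.cons u p)) := by
  unfold walkProb
  rw [← (Fin.consEquiv fun _ : Fin (t + 1 + 1) => V).sum_comp, Fintype.sum_prod_type,
    Fintype.sum_eq_single u fun w hw => sum_eq_zero fun p _ => if_neg fun h => hw h.1]
  simp only [mul_sum]
  rw [sum_comm]
  refine sum_congr rfl fun p _ => ?_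
  rw [Fintype.sum_eq_single (p 0) fun w hw => by rw [if_neg fun h => hw h.1.symm, mul_zero]]
  change (if u = u ∧ E (Fin.cons u p) then _ else _) = _
  rw [Fin.prod_univ_succ]
  by_cases hE : E (Fin.cons u p) <;> simp [hE, Fin.consEquiv]

lemma walkProb_true (hM : M ∈ rowStochastic ℝ V) (u : V) (t : ℕ) :
    walkProb M u t (fun _ => True) = 1 := by
  induction t generalizing u with
  | zero => simp [walkProb_zero]
  | succ t ih => simp [walkProb_succ, ih, sum_row_of_mem_rowStochastic hM]

lemma sum_pathWeight (hM : M ∈ rowStochastic ℝ V) (u : V) (t : ℕ) :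
    ∑ p : Fin (t + 1) → V, pathWeight M u p = 1 := by
  rw [← walkProb_true hM u t, walkProb_eq_sum_pathWeight]
  simp

lemma walkProb_le_one (hM : M ∈ rowStochastic ℝ V) (u : V) (t : ℕ)
    (E : (Fin (t + 1) → V) → Prop) : walkProb M u t E ≤ 1 :=
  (walkProb_mono (fun _ _ => nonneg_of_mem_rowStochastic hM) u fun _ _ => trivial).trans_eq
    (walkProb_true hM u t)

lemma walkProb_castLE (hM : M ∈ rowStochastic ℝ V) (u : V) {t L : ℕ} (h : t + 1 ≤ L + 1)
    (E : (Fin (t + 1) → V) → Prop) :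
    walkProb M u L (fun p => E fun i => p (i.castLE h)) = walkProb M u t E := by
  induction t generalizing u L with
  | zero =>
    have hconst : walkProb M u L (fun p => E fun i => p (i.castLE h)) =
        walkProb M u L fun _ => E fun _ => u := by
      refine sum_congr rfl fun p _ => if_congr (and_congr_right fun hp => ?_) rfl rfl
      have : (fun i : Fin (0 + 1) => p (i.castLE h)) = fun _ => u :=
        funext fun i => by rw [Fin.fin_one_eq_zero i, ← hp]; rfl
      simp only [this]
    rw [walkProb_zero, hconst]
    split_ifs with hE
    · simpa only [hE] using walkProb_true hM u L
    · simp [walkProb, hE]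
  | succ t ih =>
    obtain ⟨L, rfl⟩ : ∃ L', L = L' + 1 := ⟨L - 1, by omega⟩
    rw [walkProb_succ, walkProb_succ]
    refine sum_congr rfl fun v _ => ?_
    rw [← ih v (Nat.le_of_succ_le_succ h)]
    congr 2
    funext p
    congr 1
    funext i
    induction i using Fin.cases <;> rfl

/-- The probability that the chain started at `u` does not visit `S` during `[T, L]`. -/
def avoidProb (M : Matrix V V ℝ) (u : V) (L T : ℕ) (S : Finset V) : ℝ :=
  walkProb M u L fun p => ∀ s : Fin (L + 1), T ≤ s → p s ∉ S

lemma avoidProb_nonneg (hM : ∀ u v, 0 ≤ M u v) (u : V) (L T : ℕ) (S : Finset V) :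
    0 ≤ avoidProb M u L T S := by
  rw [avoidProb, walkProb_eq_sum_pathWeight]
  refine sum_nonneg fun p _ => ?_
  split_ifs
  exacts [pathWeight_nonneg hM u p, le_rfl]

lemma avoidProb_eq_zero_of_mem (M : Matrix V V ℝ) {u : V} {S : Finset V} (hu : u ∈ S) (t : ℕ) :
    avoidProb M u t 0 S = 0 :=
  sum_eq_zero fun _ _ => if_neg fun h => h.2 0 le_rfl (h.1 ▸ hu)

lemma avoidProb_add (M : Matrix V V ℝ) (u : V) (t T : ℕ) (S : Finset V) :
    avoidProb M u (t + T) T S = ∑ v, (M ^ T) u v * avoidProb M v t 0 S := by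
  induction T generalizing u with
  | zero => simp [one_apply]
  | succ T ih =>
    have hstep : avoidProb M u (t + (T + 1)) (T + 1) S =
        ∑ w, M u w * avoidProb M w (t + T) T S := by
      rw [avoidProb, ← add_assoc, walkProb_succ]
      simp only [Fin.forall_fin_succ (n := t + T + 1), Fin.cons_succ, Fin.val_succ, Fin.val_zero,
        add_le_add_iff_right, nonpos_iff_eq_zero, Nat.add_eq_zero_iff, one_ne_zero, and_false,
        false_imp_iff, true_and]
      rfl
    rw [hstep]
    simp only [ih, mul_sum, pow_succ', mul_apply, sum_mul]
    rw [sum_comm]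
    exact sum_congr rfl fun v _ => sum_congr rfl fun w _ => by ring

end Walks

section KilledChain

open Matrix

variable {M : Matrix V V ℝ}

/-- The substochastic matrix of the chain `M` killed on entering `S`. -/
def killed (M : Matrix V V ℝ) (S : Finset V) : Matrix V V ℝ :=
  diagonal (indicatorVec Sᶜ) * M * diagonal (indicatorVec Sᶜ)

lemma diagonal_indicatorVec_mulVec_self (S : Finset V) :
    diagonal (indicatorVec S) *ᵥ indicatorVec S = indicatorVec S := by
  funext v
  simp [mulVec_diagonal, indicatorVec]

lemma dotProduct_killed_mulVec (M : Matrix V V ℝ) (S : Finset V) (x : V → ℝ) :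
    x ⬝ᵥ killed M S *ᵥ x =
      (diagonal (indicatorVec Sᶜ) *ᵥ x) ⬝ᵥ M *ᵥ (diagonal (indicatorVec Sᶜ) *ᵥ x) := by
  rw [killed, ← mulVec_mulVec, ← mulVec_mulVec, dotProduct_mulVec, ← mulVec_transpose,
    diagonal_transpose]

lemma posSemidef_killed (hM : M.PosSemidef) (S : Finset V) : (killed M S).PosSemidef := by
  simpa only [killed, diagonal_conjTranspose, star_trivial] using
    hM.mul_mul_conjTranspose_same (diagonal (indicatorVec Sᶜ))

lemma avoidProb_eq_killed_pow_mulVec (M : Matrix V V ℝ) (S : Finset V) (t : ℕ) (u : V) :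
    avoidProb M u t 0 S = (killed M S ^ t *ᵥ indicatorVec Sᶜ) u := by
  induction t generalizing u with
  | zero => by_cases hu : u ∈ S <;> simp [avoidProb, walkProb_zero, indicatorVec, hu]
  | succ t ih =>
    have hfix : diagonal (indicatorVec Sᶜ) *ᵥ (fun v => avoidProb M v t 0 S) =
        fun v => avoidProb M v t 0 S := by
      funext v
      by_cases hv : v ∈ S
      · simp [mulVec_diagonal, avoidProb_eq_zero_of_mem M hv]
      · simp [mulVec_diagonal, indicatorVec, hv]
    have hpow : killed M S ^ (t + 1) *ᵥ indicatorVec Sᶜ =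
        diagonal (indicatorVec Sᶜ) *ᵥ M *ᵥ fun v => avoidProb M v t 0 S := by
      rw [pow_succ', ← mulVec_mulVec, ← funext ih, killed, ← mulVec_mulVec, ← mulVec_mulVec,
        hfix]
    rw [hpow, mulVec_diagonal]
    by_cases hu : u ∈ S
    · simp [avoidProb_eq_zero_of_mem M hu, indicatorVec, hu]
    · simp [avoidProb, walkProb_succ, Fin.forall_fin_succ (n := t + 1), indicatorVec, hu, mulVec,
        dotProduct]

lemma sum_avoidProb (M : Matrix V V ℝ) (S : Finset V) (t : ℕ) :
    ∑ v, avoidProb M v t 0 S = indicatorVec Sᶜ ⬝ᵥ killed M S ^ t *ᵥ indicatorVec Sᶜ := by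
  rw [indicatorVec_dotProduct, ← sum_subset (subset_univ Sᶜ)]
  · exact sum_congr rfl fun v _ => avoidProb_eq_killed_pow_mulVec M S t v
  · exact fun v _ hv => avoidProb_eq_zero_of_mem M (by simpa using hv) t

lemma sum_avoidProb_le (hM : M.PosSemidef) {S : Finset V} {c : ℝ} (hc : c ≤ 1)
    (hS : ∀ g : V → ℝ, (∀ v ∈ S, g v = 0) → c * g ⬝ᵥ g ≤ dirichletForm M g) (t : ℕ) :
    ∑ v, avoidProb M v t 0 S ≤ (1 - c) ^ t * Fintype.card V := by
  have : 0 ≤ 1 - c := sub_nonneg.mpr hc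
  have hform (x : V → ℝ) : x ⬝ᵥ killed M S *ᵥ x ≤ (1 - c) * x ⬝ᵥ x := by
    set y := diagonal (indicatorVec Sᶜ) *ᵥ x with hy
    have hyS : ∀ v ∈ S, y v = 0 := fun v hv => by
      simp [hy, mulVec_diagonal, indicatorVec, hv]
    have hyx : y ⬝ᵥ y ≤ x ⬝ᵥ x := sum_le_sum fun v _ => by
      simp only [hy, mulVec_diagonal, indicatorVec]
      split_ifs
      · rw [one_mul]
      · simpa using mul_self_nonneg (x v)
    calc x ⬝ᵥ killed M S *ᵥ x = y ⬝ᵥ y - dirichletForm M y := by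
          rw [dotProduct_killed_mulVec, dirichletForm, sub_sub_cancel]
      _ ≤ (1 - c) * y ⬝ᵥ y := by linarith [hS y hyS]
      _ ≤ (1 - c) * x ⬝ᵥ x := by gcongr
  rw [sum_avoidProb]
  refine (dotProduct_pow_mulVec_le (posSemidef_killed hM S) hform t _).trans ?_
  rw [indicatorVec_dotProduct_self]
  gcongr
  exact card_le_univ _

lemma dirichletForm_indicatorVec_compl (hM : M ∈ doublyStochastic ℝ V) (S : Finset V) :
    dirichletForm M (indicatorVec Sᶜ) = dirichletForm M (indicatorVec S) := by
  have hcompl : indicatorVec S - (1 : ℝ) • 1 = -indicatorVec Sᶜ := by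
    funext v
    by_cases hv : v ∈ S <;> simp [indicatorVec, hv]
  rw [← dirichletForm_sub_smul_one hM (indicatorVec S) 1, hcompl]
  simp only [dirichletForm, mulVec_neg, neg_dotProduct_neg]

lemma le_sum_avoidProb (hM : M ∈ doublyStochastic ℝ V) (hpsd : M.PosSemidef) {h : ℝ}
    (hdiag : ∀ v, h ≤ M v v) {S : Finset V} (hS : (#S : ℝ) < Fintype.card V)
    (hsmall : 0 ≤ 1 - (1 - h) * #S / (Fintype.card V - #S)) (t : ℕ) :
    (1 - (1 - h) * #S / (Fintype.card V - #S)) ^ t * (Fintype.card V - #S) ≤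
      ∑ v, avoidProb M v t 0 S := by
  have hpos : (0 : ℝ) < Fintype.card V - #S := sub_pos.mpr hS
  have hself : indicatorVec Sᶜ ⬝ᵥ indicatorVec Sᶜ = (Fintype.card V : ℝ) - #S := by
    rw [indicatorVec_dotProduct_self, card_compl, Nat.cast_sub (card_le_univ S)]
  rw [sum_avoidProb, ← hself]
  refine pow_mul_dotProduct_le (posSemidef_killed hpsd S) (by rwa [hself]) ?_ t
  have hform : dirichletForm M (indicatorVec Sᶜ) ≤ (1 - h) * #S :=
    (dirichletForm_indicatorVec_compl hM S).trans_le
      (dirichletForm_indicatorVec_le (M := M) (fun _ _ => nonneg_of_mem_doublyStochastic hM)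
        hdiag S)
  rw [dirichletForm, hself] at hform
  rw [dotProduct_killed_mulVec, diagonal_indicatorVec_mulVec_self, hself, sub_mul,
    div_mul_cancel₀ _ hpos.ne']
  linarith

section AfterMixing

variable {T : ℕ} {δ : ℝ}

lemma avoidProb_add_le (hM : ∀ u v, 0 ≤ M u v)
    (hmix : ∀ u v, |(M ^ T) u v - (Fintype.card V : ℝ)⁻¹| ≤ δ) (u : V) (t : ℕ) (S : Finset V) :
    avoidProb M u (t + T) T S ≤
      ((Fintype.card V : ℝ)⁻¹ + δ) * ∑ v, avoidProb M v t 0 S := by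
  rw [avoidProb_add, mul_sum]
  refine sum_le_sum fun v _ => mul_le_mul_of_nonneg_right ?_ (avoidProb_nonneg hM v t 0 S)
  linarith [(abs_le.mp (hmix u v)).2]

lemma le_avoidProb_add (hM : ∀ u v, 0 ≤ M u v)
    (hmix : ∀ u v, |(M ^ T) u v - (Fintype.card V : ℝ)⁻¹| ≤ δ) (u : V) (t : ℕ) (S : Finset V) :
    ((Fintype.card V : ℝ)⁻¹ - δ) * ∑ v, avoidProb M v t 0 S ≤ avoidProb M u (t + T) T S := by
  rw [avoidProb_add, mul_sum]
  refine sum_le_sum fun v _ => mul_le_mul_of_nonneg_right ?_ (avoidProb_nonneg hM v t 0 S)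
  linarith [(abs_le.mp (hmix u v)).1]

end AfterMixing

end KilledChain

section RegularGraphs

open Matrix

section Transitions

variable {α : Type*} {G : SimpleGraph α} {d : ℕ}

lemma simpleStep_eq_smul_adjMatrix (G : SimpleGraph α) (d : ℕ) :
    simpleStep G d = (d : ℝ)⁻¹ • G.adjMatrix ℝ := by
  ext u v
  simp [simpleStep, SimpleGraph.adjMatrix_apply]

lemma lazyStep_eq_smul_one_add [DecidableEq α] (G : SimpleGraph α) (d : ℕ) :
    lazyStep G d = (2 : ℝ)⁻¹ • (1 + simpleStep G d) := by
  ext u v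
  simp [lazyStep, simpleStep, one_apply, mul_add]

lemma isSymm_simpleStep (G : SimpleGraph α) (d : ℕ) : (simpleStep G d).IsSymm := by
  rw [simpleStep_eq_smul_adjMatrix]
  exact (G.isSymm_adjMatrix (α := ℝ)).smul _

lemma simpleStep_nonneg (u v : α) : 0 ≤ simpleStep G d u v := by
  rw [simpleStep, of_apply]
  split_ifs <;> positivity

lemma simpleStep_le (u v : α) : simpleStep G d u v ≤ (d : ℝ)⁻¹ := by
  rw [simpleStep, of_apply]
  split_ifs
  exacts [le_rfl, by positivity]

lemma two_inv_le_lazyStep_self [DecidableEq α] (v : α) : (2 : ℝ)⁻¹ ≤ lazyStep G d v v := by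
  simp [lazyStep]

/- Measuring distance in powers of `q = d^(-1/2)`, a step costs `q²`; it gains two powers of `q`
only when it approaches `v`, which P3 forbids for all but boundedly many neighbours. -/
lemma simpleStep_mul_le_of_forall_le (hconn : G.Connected) {q X : ℝ} (hq : q ^ 2 = (d : ℝ)⁻¹)
    (hq₀ : 0 ≤ q) (hq₁ : q ≤ 1) (hX : 0 ≤ X) {m : ℕ} {v : α} {f : α → ℝ}
    (hf : ∀ w, f w ≤ X * q ^ (m + G.dist w v)) (x w : α) :
    simpleStep G d x w * f w ≤
      (if G.Adj x w ∧ G.dist w v ≤ G.dist v x then X * q ^ (m + 1 + G.dist x v) else 0) +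
        simpleStep G d x w * (X * q ^ (m + 1 + G.dist x v)) := by
  by_cases hw : G.Adj x w
  swap
  · simp [simpleStep, hw]
  have htri := hconn.dist_triangle (u := x) (v := w) (w := v)
  rw [SimpleGraph.dist_eq_one_iff_adj.mpr hw] at htri
  by_cases hclose : G.dist w v ≤ G.dist v x
  · rw [if_pos ⟨hw, hclose⟩]
    have hnear : simpleStep G d x w * f w ≤ X * q ^ (m + 1 + G.dist x v) :=
      calc simpleStep G d x w * f w ≤ q ^ 2 * (X * q ^ (m + G.dist w v)) := by
            rw [simpleStep, of_apply, if_pos hw, ← hq]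
            gcongr
            exact hf w
        _ = X * q ^ (2 + (m + G.dist w v)) := by ring
        _ ≤ X * q ^ (m + 1 + G.dist x v) :=
            mul_le_mul_of_nonneg_left (pow_le_pow_of_le_one hq₀ hq₁ (by omega)) hX
    have := mul_nonneg (simpleStep_nonneg (G := G) (d := d) x w)
      (mul_nonneg hX (pow_nonneg hq₀ (m + 1 + G.dist x v)))
    linarith
  · rw [if_neg (by tauto), zero_add]
    rw [SimpleGraph.dist_comm (u := v)] at hclose
    exact mul_le_mul_of_nonneg_left ((hf w).trans
      (mul_le_mul_of_nonneg_left (pow_le_pow_of_le_one hq₀ hq₁ (by omega)) hX))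
      (simpleStep_nonneg x w)

end Transitions

variable {G : SimpleGraph V} {d : ℕ}

lemma simpleStep_mem_doublyStochastic (hG : G.IsRegularOfDegree d) (hd : d ≠ 0) :
    simpleStep G d ∈ doublyStochastic ℝ V := by
  have hrow (u : V) : ∑ v, simpleStep G d u v = 1 := by
    have hsum : ∑ v, G.adjMatrix ℝ u v = d := by
      simpa [mulVec, dotProduct] using
        G.adjMatrix_mulVec_const_apply_of_regular (a := (1 : ℝ)) hG (v := u)
    simp only [simpleStep_eq_smul_adjMatrix, Matrix.smul_apply, smul_eq_mul, ← mul_sum, hsum]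
    exact inv_mul_cancel₀ (Nat.cast_ne_zero.mpr hd)
  refine mem_doublyStochastic_iff_sum.mpr ⟨simpleStep_nonneg, hrow, fun v => ?_⟩
  simpa only [(isSymm_simpleStep G d).apply] using hrow v

lemma lazyStep_mem_doublyStochastic (hG : G.IsRegularOfDegree d) (hd : d ≠ 0) :
    lazyStep G d ∈ doublyStochastic ℝ V := by
  rw [lazyStep_eq_smul_one_add, smul_add]
  exact convex_doublyStochastic (one_mem _) (simpleStep_mem_doublyStochastic hG hd)
    (by positivity) (by positivity) (by norm_num)

lemma dirichletForm_lazyStep (x : V → ℝ) :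
    dirichletForm (lazyStep G d) x = 2⁻¹ * dirichletForm (simpleStep G d) x := by
  rw [lazyStep_eq_smul_one_add, dirichletForm, dirichletForm, smul_mulVec, add_mulVec,
    one_mulVec, dotProduct_smul, dotProduct_add, smul_eq_mul]
  ring

lemma posSemidef_lazyStep (hG : G.IsRegularOfDegree d) (hd : d ≠ 0) :
    (lazyStep G d).PosSemidef := by
  rw [lazyStep_eq_smul_one_add]
  refine posSemidef_real_iff.mpr ⟨(isSymm_one.add (isSymm_simpleStep G d)).smul _, fun x => ?_⟩
  have habs := abs_dotProduct_mulVec_le_of_mem_doublyStochastic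
    (simpleStep_mem_doublyStochastic hG hd) x
  rw [smul_mulVec, add_mulVec, one_mulVec, dotProduct_smul, dotProduct_add, smul_eq_mul]
  linarith [neg_le_of_abs_le habs]

lemma SpectralGapLB.hasSpectralGap_lazyStep {g : ℝ} (h : SpectralGapLB G d g) :
    HasSpectralGap (lazyStep G d) g := by
  intro x hx
  have hform : x ⬝ᵥ lazyStep G d *ᵥ x = ∑ u, ∑ v, x u * lazyStep G d u v * x v := by
    simp only [dotProduct, mulVec, mul_sum, mul_assoc]
  have hself : x ⬝ᵥ x = ∑ v, x v ^ 2 := by simp only [dotProduct, sq]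
  rw [dirichletForm, hform, hself]
  linarith [h x hx]

lemma SpectralGapLB.hasSpectralGap_simpleStep {g : ℝ} (h : SpectralGapLB G d g) :
    HasSpectralGap (simpleStep G d) (2 * g) := by
  intro x hx
  have hlazy := h.hasSpectralGap_lazyStep x hx
  rw [dirichletForm_lazyStep] at hlazy
  linarith

lemma simpleStep_pow_apply_eq_zero (hconn : G.Connected) {m : ℕ} {x v : V}
    (h : m < G.dist x v) : (simpleStep G d ^ m) x v = 0 := by
  induction m generalizing x with
  | zero => exact one_apply_ne fun hxv => by simp [hxv] at h
  | succ m ih =>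
    rw [pow_succ', mul_apply]
    refine sum_eq_zero fun w _ => ?_
    by_cases hw : G.Adj x w
    · have htri := hconn.dist_triangle (u := x) (v := w) (w := v)
      rw [SimpleGraph.dist_eq_one_iff_adj.mpr hw] at htri
      rw [ih (by omega), mul_zero]
    · simp [simpleStep, hw]

lemma simpleStep_pow_apply_le {ε ρ : ℝ} {R m : ℕ} (hG : G.IsRegularOfDegree d)
    (hconn : G.Connected) (hd : d ≠ 0) (hρ : 0 ≤ ρ) (hP3 : PropP3 G d ε ρ)
    (hR : (R : ℝ) ≤ (d : ℝ) ^ ε) (hm : m ≤ R) (x v : V) :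
    (simpleStep G d ^ m) x v ≤ (R * ρ + 1) ^ m * (√(d : ℝ))⁻¹ ^ (m + G.dist x v) := by
  have hd₁ : (1 : ℝ) ≤ d := Nat.one_le_cast.mpr (Nat.one_le_iff_ne_zero.mpr hd)
  have hq₁ : (√(d : ℝ))⁻¹ ≤ 1 := inv_le_one_of_one_le₀ (Real.one_le_sqrt.mpr hd₁)
  have hq₂ : (√(d : ℝ))⁻¹ ^ 2 = (d : ℝ)⁻¹ := by rw [inv_pow, Real.sq_sqrt (by positivity)]
  set q : ℝ := (√(d : ℝ))⁻¹
  have hq₀ : 0 ≤ q := by positivity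
  induction m generalizing x with
  | zero =>
    by_cases hxv : x = v
    · simp [hxv]
    · rw [pow_zero, one_apply_ne hxv]
      positivity
  | succ m ih =>
    set Y := (R * ρ + 1) ^ m * q ^ (m + 1 + G.dist x v) with hY
    by_cases hfar : m + 1 < G.dist x v
    · rw [simpleStep_pow_apply_eq_zero hconn hfar]
      positivity
    have hdist : (G.dist v x : ℝ) ≤ R := by
      rw [SimpleGraph.dist_comm]
      exact_mod_cast (not_lt.mp hfar).trans hm
    have hcount : (#{w | G.Adj x w ∧ G.dist w v ≤ G.dist v x} : ℝ) ≤ R * ρ :=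
      (hP3 v x (hdist.trans hR)).trans (by rw [mul_comm]; gcongr)
    rw [pow_succ', mul_apply]
    calc ∑ w, simpleStep G d x w * (simpleStep G d ^ m) w v
        ≤ ∑ w, ((if G.Adj x w ∧ G.dist w v ≤ G.dist v x then Y else 0) + simpleStep G d x w * Y) :=
          sum_le_sum fun w _ => simpleStep_mul_le_of_forall_le hconn hq₂ hq₀ hq₁ (by positivity)
            (fun w => ih (by omega) w) x w
      _ = #{w | G.Adj x w ∧ G.dist w v ≤ G.dist v x} * Y + Y := by
          rw [sum_add_distrib, ← sum_mul,
            sum_row_of_mem_doublyStochastic (simpleStep_mem_doublyStochastic hG hd), one_mul,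
            ← sum_filter, sum_const, nsmul_eq_mul]
      _ ≤ R * ρ * Y + Y := by gcongr
      _ = (R * ρ + 1) ^ (m + 1) * q ^ (m + 1 + G.dist x v) := by rw [hY]; ring

end RegularGraphs

section DenseSubgraphs

section Interedges

variable {α : Type*} {G : SimpleGraph α}

lemma card_filter_interedges_le [DecidableEq α] (G : SimpleGraph α) (A S : Finset α) :
    #{e ∈ G.interedges S S | e.1 ∈ A ∨ e.2 ∈ A} ≤ 2 * #(G.interedges A S) := by
  have hsub : {e ∈ G.interedges S S | e.1 ∈ A ∨ e.2 ∈ A} ⊆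
      G.interedges A S ∪ G.interedges S A := by
    intro e he
    simp only [mem_filter, mem_union, SimpleGraph.mem_interedges_iff] at he ⊢
    tauto
  have hsymm : #(G.interedges S A) = #(G.interedges A S) :=
    haveI := G.symm
    Rel.card_interedges_comm (r := G.Adj) S A
  linarith [(card_le_card hsub).trans (card_union_le _ _)]

lemma card_interedges_self_le [DecidableEq α] (G : SimpleGraph α) (A S : Finset α) :
    #(G.interedges S S) ≤ #(G.interedges (S \ A) (S \ A)) + 2 * #(G.interedges A S) := by
  have hrest : {e ∈ G.interedges S S | ¬(e.1 ∈ A ∨ e.2 ∈ A)} = G.interedges (S \ A) (S \ A) := by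
    ext e
    simp only [mem_filter, SimpleGraph.mem_interedges_iff, Finset.mem_sdiff]
    tauto
  rw [← card_filter_add_card_filter_not (s := G.interedges S S) (fun e => e.1 ∈ A ∨ e.2 ∈ A),
    hrest, add_comm]
  exact Nat.add_le_add_left (card_filter_interedges_le G A S) _

lemma card_interedges_eq_sum (G : SimpleGraph α) (A S : Finset α) :
    #(G.interedges A S) = ∑ v ∈ A, #{w ∈ S | G.Adj v w} := by
  simp only [SimpleGraph.interedges_def, card_filter, sum_product]

/- A subset of `S` maximizing `e(T) - 2 δ |T|` cannot be improved by deleting a vertex. -/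
lemma exists_subset_forall_le_card_filter_adj {S : Finset α} {δ : ℝ}
    (h : 2 * δ * #S < #(G.interedges S S)) :
    ∃ T ⊆ S, T.Nonempty ∧ ∀ v ∈ T, δ ≤ #{w ∈ T | G.Adj v w} := by
  obtain ⟨T, hTS, hmax⟩ := exists_max_image S.powerset
    (fun T : Finset α => (#(G.interedges T T) : ℝ) - 2 * δ * #T) ⟨S, mem_powerset_self S⟩
  rw [mem_powerset] at hTS
  refine ⟨T, hTS, nonempty_iff_ne_empty.mpr fun hempty => ?_, fun v hv => ?_⟩
  · have := hmax S (mem_powerset_self S)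
    simp only [hempty, SimpleGraph.interedges_empty_left, card_empty, Nat.cast_zero] at this
    linarith
  · have hdel := hmax (T \ {v}) (mem_powerset.mpr (sdiff_subset.trans hTS))
    have hcard : (#(T \ {v}) : ℝ) = #T - 1 := by
      rw [sdiff_singleton_eq_erase, card_erase_of_mem hv, Nat.cast_pred (card_pos.mpr ⟨v, hv⟩)]
    have hedges : (#(G.interedges T T) : ℝ) ≤
        #(G.interedges (T \ {v}) (T \ {v})) + 2 * #{w ∈ T | G.Adj v w} := by
      have := card_interedges_self_le G {v} T
      rw [card_interedges_eq_sum G {v} T, sum_singleton] at this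
      exact_mod_cast this
    rw [hcard] at hdel
    linarith

/- A maximal connected subset of `S` contains all neighbours in `S` of its vertices. -/
lemma exists_subset_connected_forall_le_card_filter_adj {S : Finset α} {δ : ℝ} (hne : S.Nonempty)
    (hS : ∀ v ∈ S, δ ≤ #{w ∈ S | G.Adj v w}) :
    ∃ T ⊆ S, (G.induce (T : Set α)).Connected ∧ ∀ v ∈ T, δ ≤ #{w ∈ T | G.Adj v w} := by
  obtain ⟨x, hx⟩ := hne
  set F := S.powerset.filter fun T : Finset α => (G.induce (T : Set α)).Connected
  have hF : F.Nonempty := by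
    refine ⟨{x}, mem_filter.mpr ⟨mem_powerset.mpr (singleton_subset_iff.mpr hx), ?_⟩⟩
    rw [coe_singleton, SimpleGraph.induce_singleton_eq_top]
    exact SimpleGraph.connected_top
  obtain ⟨T, hT⟩ := exists_maximal hF
  obtain ⟨hTS, hconn⟩ := mem_filter.mp hT.prop
  rw [mem_powerset] at hTS
  refine ⟨T, hTS, hconn, fun v hv => (hS v (hTS hv)).trans (Nat.cast_le.mpr (card_le_card ?_))⟩
  intro w hw
  obtain ⟨hwS, hadj⟩ := mem_filter.mp hw
  have hinsert : insert w T ∈ F := by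
    refine mem_filter.mpr ⟨mem_powerset.mpr (insert_subset hwS hTS), ?_⟩
    have hset : ((insert w T : Finset α) : Set α) = ↑T ∪ {v, w} := by
      rw [coe_insert, Set.union_insert, Set.union_singleton, Set.insert_comm,
        Set.insert_eq_of_mem (mem_coe.mpr hv)]
    rw [hset]
    exact SimpleGraph.induce_union_connected hconn.preconnected
      (SimpleGraph.induce_pair_connected_of_adj hadj).preconnected ⟨v, hv, Set.mem_insert v _⟩
  exact mem_filter.mpr ⟨hT.le_of_ge hinsert (subset_insert w T) (mem_insert_self w T), hadj⟩

end Interedges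

variable {α : Type*} [Fintype α] {G : SimpleGraph α} {d : ℕ}

lemma card_interedges_univ (hG : G.IsRegularOfDegree d) (A : Finset α) :
    #(G.interedges A univ) = #A * d := by
  rw [card_interedges_eq_sum, sum_const_nat fun v _ => ?_]
  rw [← SimpleGraph.neighborFinset_eq_filter, SimpleGraph.card_neighborFinset_eq_degree]
  exact hG v

/-- The vertices of `S` at distance `i` from `x`. -/
def sphereIn (G : SimpleGraph α) (S : Finset α) (x : α) (i : ℕ) : Finset α :=
  {y ∈ S | G.dist x y = i}

/- Double counting of the edges between two consecutive spheres: by P3, a vertex has few neighbours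
that are not farther from `x` than itself. -/
lemma card_sphereIn_mul_le {ε ρ δ : ℝ} (hconn : G.Connected) (hP3 : PropP3 G d ε ρ)
    {S : Finset α} (hS : ∀ v ∈ S, δ ≤ #{w ∈ S | G.Adj v w}) (x : α) {i : ℕ}
    (hi : ((i + 1 : ℕ) : ℝ) ≤ (d : ℝ) ^ ε) :
    #(sphereIn G S x i) * (δ - ρ * i) ≤ #(sphereIn G S x (i + 1)) * (ρ * (i + 1 : ℕ)) := by
  have hout : ∀ v ∈ sphereIn G S x i,
      δ - ρ * i ≤ #((sphereIn G S x (i + 1)).bipartiteAbove G.Adj v) := by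
    intro v hv
    obtain ⟨hvS, hdist⟩ := mem_filter.mp hv
    have hback := hP3 x v (by rw [hdist]; exact (Nat.cast_le.mpr i.le_succ).trans hi)
    rw [hdist] at hback
    have hsub : {w ∈ S | G.Adj v w} ⊆ ({w | G.Adj v w ∧ G.dist w x ≤ i} : Finset α) ∪
        (sphereIn G S x (i + 1)).bipartiteAbove G.Adj v := by
      intro w hw
      obtain ⟨hwS, hadj⟩ := mem_filter.mp hw
      have htri := hconn.dist_triangle (u := x) (v := v) (w := w)
      rw [SimpleGraph.dist_eq_one_iff_adj.mpr hadj, hdist] at htri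
      simp only [sphereIn, bipartiteAbove, mem_union, mem_filter, mem_univ, true_and, hwS, hadj,
        and_true, SimpleGraph.dist_comm (u := w)]
      omega
    have hcard : (#{w ∈ S | G.Adj v w} : ℝ) ≤ #{w | G.Adj v w ∧ G.dist w x ≤ i} +
        #((sphereIn G S x (i + 1)).bipartiteAbove G.Adj v) := by
      exact_mod_cast (card_le_card hsub).trans (card_union_le _ _)
    linarith [hS v hvS]
  have hin : ∀ w ∈ sphereIn G S x (i + 1),
      (#((sphereIn G S x i).bipartiteBelow G.Adj w) : ℝ) ≤ ρ * (i + 1 : ℕ) := by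
    intro w hw
    obtain ⟨-, hdist⟩ := mem_filter.mp hw
    have hback := hP3 x w (by rwa [hdist])
    rw [hdist] at hback
    refine le_trans (Nat.cast_le.mpr (card_le_card fun v hv => ?_)) hback
    obtain ⟨hv, hadj⟩ := mem_filter.mp hv
    refine mem_filter.mpr ⟨mem_univ v, hadj.symm, ?_⟩
    rw [SimpleGraph.dist_comm, (mem_filter.mp hv).2]
    exact i.le_succ
  simpa only [nsmul_eq_mul] using card_nsmul_le_card_nsmul G.Adj hout hin

lemma three_pow_le_card {ε ρ : ℝ} (hconn : G.Connected) (hρ : 0 < ρ) (hP3 : PropP3 G d ε ρ)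
    {r : ℕ} (hr : (r : ℝ) ≤ (d : ℝ) ^ ε) {S : Finset α} (hne : S.Nonempty)
    (hS : ∀ v ∈ S, 4 * ρ * r ≤ #{w ∈ S | G.Adj v w}) : (3 : ℝ) ^ r ≤ #S := by
  obtain ⟨x, hx⟩ := hne
  have hsphere : ∀ i ≤ r, (3 : ℝ) ^ i ≤ #(sphereIn G S x i) := by
    intro i
    induction i with
    | zero =>
      have : 0 < #(sphereIn G S x 0) := card_pos.mpr ⟨x, mem_filter.mpr ⟨hx, by simp⟩⟩
      exact fun _ => by simpa using this
    | succ i ih =>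
      intro hi
      have hir : ((i + 1 : ℕ) : ℝ) ≤ r := Nat.cast_le.mpr hi
      have hstep := card_sphereIn_mul_le hconn hP3 hS x (hir.trans hr)
      have hdeg : 3 * (ρ * (i + 1 : ℕ)) ≤ 4 * ρ * r - ρ * i := by
        have := mul_le_mul_of_nonneg_left hir hρ.le
        push_cast at this ⊢
        linarith
      have hgrow : (#(sphereIn G S x i) * 3) * (ρ * (i + 1 : ℕ)) ≤
          #(sphereIn G S x (i + 1)) * (ρ * (i + 1 : ℕ)) := by
        rw [mul_assoc]
        exact (mul_le_mul_of_nonneg_left hdeg (Nat.cast_nonneg _)).trans hstep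
      rw [pow_succ]
      have := le_of_mul_le_mul_right hgrow (by positivity)
      linarith [ih (by omega)]
  exact (hsphere r le_rfl).trans (Nat.cast_le.mpr (card_filter_le _ _))

lemma exists_subset_connected_three_pow_le_card {ε ρ : ℝ} (hconn : G.Connected) (hρ : 0 < ρ)
    (hP3 : PropP3 G d ε ρ) {r : ℕ} (hr : (r : ℝ) ≤ (d : ℝ) ^ ε) {S : Finset α}
    (hS : 2 * (4 * ρ * r) * #S < #(G.interedges S S)) :
    ∃ T ⊆ S, (G.induce (T : Set α)).Connected ∧ (3 : ℝ) ^ r ≤ #T := by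
  obtain ⟨S₁, hS₁, hne, hdeg₁⟩ := exists_subset_forall_le_card_filter_adj hS
  obtain ⟨T, hT, hTconn, hdeg⟩ := exists_subset_connected_forall_le_card_filter_adj hne hdeg₁
  have hTne : T.Nonempty := coe_nonempty.mp (Set.nonempty_coe_sort.mp hTconn.nonempty)
  exact ⟨T, hT.trans hS₁, hTconn, three_pow_le_card hconn hρ hP3 hr hTne hdeg⟩

end DenseSubgraphs

section WeightedMoments

variable {Ω : Type*} [Fintype Ω] {w X : Ω → ℝ} {a b κ : ℝ}

lemma sum_ite_lt_half_le (hw : ∀ ω, 0 ≤ w ω) (hsum : ∑ ω, w ω = 1) (ha : 0 < a)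
    (hmean : a ≤ ∑ ω, w ω * X ω) (hsecond : ∑ ω, w ω * X ω ^ 2 ≤ b) :
    ∑ ω, (if X ω < a / 2 then w ω else 0) ≤ 4 * (b / a ^ 2 - 1) := by
  have hpt (ω : Ω) : (if X ω < a / 2 then w ω else 0) ≤ w ω * (4 / a ^ 2 * (X ω - a) ^ 2) := by
    split_ifs with h
    · refine le_mul_of_one_le_right (hw ω) ?_
      rw [div_mul_eq_mul_div, one_le_div (by positivity)]
      nlinarith
    · exact mul_nonneg (hw ω) (by positivity)
  calc ∑ ω, (if X ω < a / 2 then w ω else 0)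
      ≤ ∑ ω, 4 / a ^ 2 * (w ω * X ω ^ 2 - 2 * a * (w ω * X ω) + a ^ 2 * w ω) :=
        sum_le_sum fun ω _ => (hpt ω).trans_eq (by ring)
    _ = 4 / a ^ 2 * (∑ ω, w ω * X ω ^ 2 - 2 * a * ∑ ω, w ω * X ω + a ^ 2) := by
        rw [← mul_sum, sum_add_distrib, sum_sub_distrib, ← mul_sum, ← mul_sum, hsum, mul_one]
    _ ≤ 4 / a ^ 2 * (b - 2 * a * a + a ^ 2) := by gcongr
    _ = 4 * (b / a ^ 2 - 1) := by field_simp; ring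

lemma sum_ite_mul_lt_le (hw : ∀ ω, 0 ≤ w ω) (hX : ∀ ω, 0 ≤ X ω) (hκ : 0 < κ) (ha : 0 < a)
    (hmean : ∑ ω, w ω * X ω ≤ a) : ∑ ω, (if κ * a < X ω then w ω else 0) ≤ 1 / κ := by
  have hpt (ω : Ω) : (if κ * a < X ω then w ω else 0) ≤ (κ * a)⁻¹ * (w ω * X ω) := by
    have hκa : 0 < κ * a := by positivity
    split_ifs with h
    · rw [inv_mul_eq_div, le_div_iff₀ hκa]
      exact mul_le_mul_of_nonneg_left h.le (hw ω)
    · exact mul_nonneg (inv_nonneg.mpr hκa.le) (mul_nonneg (hw ω) (hX ω))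
  calc ∑ ω, (if κ * a < X ω then w ω else 0) ≤ (κ * a)⁻¹ * ∑ ω, w ω * X ω := by
        rw [mul_sum]
        exact sum_le_sum fun ω _ => hpt ω
    _ ≤ (κ * a)⁻¹ * a := by gcongr
    _ = 1 / κ := by field_simp

lemma le_sum_ite_of_moments {Y : Ω → ℝ} {m : ℝ} {E : Ω → Prop} (hw : ∀ ω, 0 ≤ w ω)
    (hsum : ∑ ω, w ω = 1) (ha : 0 < a) (hmean : a ≤ ∑ ω, w ω * X ω)
    (hsecond : ∑ ω, w ω * X ω ^ 2 ≤ b) (hY : ∀ ω, 0 ≤ Y ω) (hκ : 0 < κ) (hm : 0 < m)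
    (hYmean : ∑ ω, w ω * Y ω ≤ m) (hE : ∀ ω, a / 2 ≤ X ω → Y ω ≤ κ * m → E ω) :
    1 - 4 * (b / a ^ 2 - 1) - 1 / κ ≤ ∑ ω, if E ω then w ω else 0 := by
  have hfew := sum_ite_lt_half_le hw hsum ha hmean hsecond
  have hmany := sum_ite_mul_lt_le hw hY hκ hm hYmean
  have hcover : 1 ≤ (∑ ω, if E ω then w ω else 0) + ∑ ω, (if X ω < a / 2 then w ω else 0) +
      ∑ ω, (if κ * m < Y ω then w ω else 0) := by
    rw [← hsum, ← sum_add_distrib, ← sum_add_distrib]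
    refine sum_le_sum fun ω _ => ?_
    have hω := hw ω
    by_cases hXω : X ω < a / 2
    · rw [if_pos hXω]
      split_ifs <;> linarith
    by_cases hYω : κ * m < Y ω
    · rw [if_pos hYω]
      split_ifs <;> linarith
    rw [if_pos (hE ω (not_lt.mp hXω) (not_lt.mp hYω)), if_neg hXω, if_neg hYω, add_zero, add_zero]
  linarith

end WeightedMoments

section VacantSet

open Matrix

variable {M : Matrix V V ℝ} {G : SimpleGraph V} {d : ℕ}

/-- The vertices that the trajectory `p` does not visit from time `T` on. -/
def vacantSet {L : ℕ} (T : ℕ) (p : Fin (L + 1) → V) : Finset V :=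
  {v | ∀ s : Fin (L + 1), T ≤ s → p s ≠ v}

lemma subset_vacantSet {L T : ℕ} {p : Fin (L + 1) → V} {S : Finset V} :
    S ⊆ vacantSet T p ↔ ∀ s : Fin (L + 1), T ≤ s → p s ∉ S := by
  simp only [subset_iff, vacantSet, mem_filter, mem_univ, true_and]
  exact ⟨fun h s hs hp => h hp s hs rfl, fun h v hv s hs hp => h s hs (hp ▸ hv)⟩

lemma sum_pathWeight_mul_card_filter {ι : Type*} (M : Matrix V V ℝ) (u : V) (L T : ℕ)
    (I : Finset ι) (S : ι → Finset V) :
    ∑ p : Fin (L + 1) → V, pathWeight M u p * #{i ∈ I | S i ⊆ vacantSet T p} =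
      ∑ i ∈ I, avoidProb M u L T (S i) := by
  simp only [avoidProb, walkProb_eq_sum_pathWeight, ← subset_vacantSet]
  rw [sum_comm]
  refine sum_congr rfl fun p _ => ?_
  rw [card_filter, Nat.cast_sum, mul_sum]
  refine sum_congr rfl fun i _ => ?_
  split_ifs <;> simp

lemma sum_pathWeight_mul_card_vacantSet (M : Matrix V V ℝ) (u : V) (L T : ℕ) :
    ∑ p : Fin (L + 1) → V, pathWeight M u p * #(vacantSet T p) =
      ∑ v, avoidProb M u L T {v} := by
  rw [← sum_pathWeight_mul_card_filter]
  refine sum_congr rfl fun p _ => ?_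
  simp only [singleton_subset_iff, filter_univ_mem]

lemma interedges_vacantSet {L : ℕ} (G : SimpleGraph V) (T : ℕ) (p : Fin (L + 1) → V) :
    G.interedges (vacantSet T p) (vacantSet T p) =
      {e ∈ G.interedges univ univ | {e.1, e.2} ⊆ vacantSet T p} := by
  ext e
  simp only [SimpleGraph.mem_interedges_iff, mem_filter, mem_univ, true_and, insert_subset_iff,
    singleton_subset_iff]
  tauto

lemma sum_pathWeight_mul_card_interedges (G : SimpleGraph V) (M : Matrix V V ℝ) (u : V)
    (L T : ℕ) :
    ∑ p : Fin (L + 1) → V, pathWeight M u p * #(G.interedges (vacantSet T p) (vacantSet T p)) =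
      ∑ e ∈ G.interedges univ univ, avoidProb M u L T {e.1, e.2} := by
  rw [← sum_pathWeight_mul_card_filter]
  exact sum_congr rfl fun p _ => by rw [interedges_vacantSet]

lemma sum_pathWeight_mul_sq_card_interedges (G : SimpleGraph V) (M : Matrix V V ℝ) (u : V)
    (L T : ℕ) :
    ∑ p : Fin (L + 1) → V,
        pathWeight M u p * (#(G.interedges (vacantSet T p) (vacantSet T p)) : ℝ) ^ 2 =
      ∑ e ∈ G.interedges univ univ, ∑ f ∈ G.interedges univ univ,
        avoidProb M u L T ({e.1, e.2} ∪ {f.1, f.2}) := by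
  rw [← sum_product', ← sum_pathWeight_mul_card_filter M u L T _
    fun x : (V × V) × V × V => {x.1.1, x.1.2} ∪ {x.2.1, x.2.2}]
  refine sum_congr rfl fun p _ => ?_
  rw [interedges_vacantSet, sq, ← Nat.cast_mul, ← card_product, ← filter_product]
  simp only [union_subset_iff]

lemma avoidProb_anti (hM : ∀ u v, 0 ≤ M u v) (u : V) (L T : ℕ) {S S' : Finset V} (h : S ⊆ S') :
    avoidProb M u L T S' ≤ avoidProb M u L T S :=
  walkProb_mono hM u fun _ hp s hs hmem => hp s hs (h hmem)

lemma sum_avoidProb_union_le (hM : ∀ u v, 0 ≤ M u v) (hG : G.IsRegularOfDegree d) {u : V}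
    {L T : ℕ} {U₂ U₄ : ℝ} (hU₂ : 0 ≤ U₂) (hU₄ : 0 ≤ U₄)
    (h₂ : ∀ S : Finset V, #S = 2 → avoidProb M u L T S ≤ U₂)
    (h₄ : ∀ S : Finset V, #S = 4 → avoidProb M u L T S ≤ U₄) {e : V × V} (he : G.Adj e.1 e.2) :
    ∑ f ∈ G.interedges univ univ, avoidProb M u L T ({e.1, e.2} ∪ {f.1, f.2}) ≤
      Fintype.card V * d * U₄ + 4 * d * U₂ := by
  set A : Finset V := {e.1, e.2}
  have hcardA : #A = 2 := card_pair he.ne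
  have hpt : ∀ f ∈ G.interedges univ univ, avoidProb M u L T (A ∪ {f.1, f.2}) ≤
      U₄ + if f.1 ∈ A ∨ f.2 ∈ A then U₂ else 0 := by
    intro f hf
    have hadj : G.Adj f.1 f.2 := ((SimpleGraph.mem_interedges_iff G).mp hf).2.2
    split_ifs with hmeet
    · exact ((avoidProb_anti hM u L T subset_union_left).trans (h₂ A hcardA)).trans (by linarith)
    · rw [add_zero]
      refine h₄ _ ?_
      have hdisj : Disjoint A {f.1, f.2} := by
        rw [disjoint_insert_right, disjoint_singleton_right]
        exact not_or.mp hmeet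
      rw [card_union_of_disjoint hdisj, hcardA, card_pair hadj.ne]
  have htouch : (#{f ∈ G.interedges univ univ | f.1 ∈ A ∨ f.2 ∈ A} : ℝ) ≤ 4 * d := by
    have := card_filter_interedges_le G A univ
    rw [card_interedges_univ hG, hcardA, ← mul_assoc, show 2 * 2 = 4 from rfl] at this
    exact_mod_cast this
  calc ∑ f ∈ G.interedges univ univ, avoidProb M u L T (A ∪ {f.1, f.2})
      ≤ #(G.interedges univ univ) * U₄ +
          #{f ∈ G.interedges univ univ | f.1 ∈ A ∨ f.2 ∈ A} * U₂ := by
        refine (sum_le_sum hpt).trans_eq ?_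
        rw [sum_add_distrib, sum_const, ← sum_filter, sum_const, nsmul_eq_mul, nsmul_eq_mul]
    _ ≤ Fintype.card V * d * U₄ + 4 * d * U₂ := by
        rw [card_interedges_univ hG, card_univ, Nat.cast_mul]
        gcongr

lemma bigVacantComponent_castLE {α : Type*} {G : SimpleGraph α} {t L T : ℕ} {K : ℝ}
    (h : t + 1 ≤ L + 1) {p : Fin (L + 1) → α} (hp : bigVacantComponent G p T K) :
    bigVacantComponent G (fun i => p (i.castLE h)) T K := by
  obtain ⟨S, hS, hconn, hcard⟩ := hp
  exact ⟨S, fun v hv s hs => hS v hv (s.castLE h) hs, hconn, hcard⟩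

/- The `T` vertices visited before time `T` meet at most `2 T d` ordered edges, so the vertices that
are never visited still span many edges. -/
lemma bigVacantComponent_of_lt_card_interedges {ε ρ : ℝ} (hG : G.IsRegularOfDegree d)
    (hconn : G.Connected) (hρ : 0 < ρ) (hP3 : PropP3 G d ε ρ) {r : ℕ} (hr : (r : ℝ) ≤ (d : ℝ) ^ ε)
    {L T : ℕ} {p : Fin (L + 1) → V}
    (h : 2 * (4 * ρ * r) * #(vacantSet T p) + 2 * T * d <
      #(G.interedges (vacantSet T p) (vacantSet T p))) (t₀ : ℕ) :
    bigVacantComponent G p t₀ (3 ^ r) := by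
  set early : Finset V := ({s : Fin (L + 1) | (s : ℕ) < T} : Finset _).image p
  have hcard : #early ≤ T := by
    refine card_image_le.trans ?_
    rw [Fin.card_filter_val_lt]
    exact min_le_right _ _
  have hedges : (#(G.interedges (vacantSet T p) (vacantSet T p)) : ℝ) ≤
      #(G.interedges (vacantSet T p \ early) (vacantSet T p \ early)) + 2 * T * d := by
    have htouch : #(G.interedges early (vacantSet T p)) ≤ T * d :=
      calc #(G.interedges early (vacantSet T p)) ≤ #(G.interedges early univ) :=
            card_le_card (SimpleGraph.interedges_mono G subset_rfl (subset_univ _))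
        _ ≤ T * d := by
            rw [card_interedges_univ hG]
            gcongr
    have := card_interedges_self_le G early (vacantSet T p)
    rw [mul_assoc]
    exact_mod_cast this.trans (Nat.add_le_add_left (Nat.mul_le_mul_left 2 htouch) _)
  have hsdiff : (#(vacantSet T p \ early) : ℝ) ≤ #(vacantSet T p) :=
    Nat.cast_le.mpr (card_le_card sdiff_subset)
  obtain ⟨S, hS, hSconn, hSr⟩ := exists_subset_connected_three_pow_le_card hconn hρ hP3 hr
    (S := vacantSet T p \ early) (by
      have := mul_le_mul_of_nonneg_left hsdiff (by positivity : 0 ≤ 2 * (4 * ρ * r))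
      linarith)
  refine ⟨S, fun v hv s _ hps => ?_, hSconn, hSr⟩
  obtain ⟨hvac, hnot⟩ := Finset.mem_sdiff.mp (hS hv)
  rcases lt_or_ge (s : ℕ) T with hs | hs
  · exact hnot (mem_image.mpr ⟨s, mem_filter.mpr ⟨mem_univ s, hs⟩, hps⟩)
  · exact (mem_filter.mp hvac).2 s hs hps

lemma le_sum_pathWeight_mul_card_interedges (hG : G.IsRegularOfDegree d) {u : V} {L T : ℕ} {q : ℝ}
    (hlow : ∀ S : Finset V, #S = 2 → q ≤ avoidProb M u L T S) :
    Fintype.card V * d * q ≤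
      ∑ p : Fin (L + 1) → V,
        pathWeight M u p * #(G.interedges (vacantSet T p) (vacantSet T p)) := by
  rw [sum_pathWeight_mul_card_interedges]
  calc Fintype.card V * d * q = #(G.interedges univ univ) • q := by
        rw [card_interedges_univ hG, card_univ, nsmul_eq_mul, Nat.cast_mul]
    _ ≤ _ := card_nsmul_le_sum _ _ _ fun e he =>
        hlow _ (card_pair ((SimpleGraph.mem_interedges_iff G).mp he).2.2.ne)

lemma sum_pathWeight_mul_sq_card_interedges_le (hM : ∀ u v, 0 ≤ M u v)
    (hG : G.IsRegularOfDegree d) {u : V} {L T : ℕ} {U₂ U₄ : ℝ} (hU₂ : 0 ≤ U₂) (hU₄ : 0 ≤ U₄)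
    (h₂ : ∀ S : Finset V, #S = 2 → avoidProb M u L T S ≤ U₂)
    (h₄ : ∀ S : Finset V, #S = 4 → avoidProb M u L T S ≤ U₄) :
    ∑ p : Fin (L + 1) → V,
        pathWeight M u p * (#(G.interedges (vacantSet T p) (vacantSet T p)) : ℝ) ^ 2 ≤
      Fintype.card V * d * (Fintype.card V * d * U₄ + 4 * d * U₂) := by
  rw [sum_pathWeight_mul_sq_card_interedges]
  refine (sum_le_card_nsmul _ _ _ fun e he => sum_avoidProb_union_le hM hG hU₂ hU₄ h₂ h₄
    ((SimpleGraph.mem_interedges_iff G).mp he).2.2).trans_eq ?_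
  rw [card_interedges_univ hG, card_univ, nsmul_eq_mul, Nat.cast_mul]

theorem le_walkProb_bigVacantComponent {ε ρ q U₁ U₂ U₄ κ : ℝ} {r t T : ℕ} {u : V}
    (hM : M ∈ rowStochastic ℝ V) (hG : G.IsRegularOfDegree d) (hconn : G.Connected) (hd : d ≠ 0)
    (hρ : 0 < ρ) (hP3 : PropP3 G d ε ρ) (hr : (r : ℝ) ≤ (d : ℝ) ^ ε)
    (hq : 0 < q) (hU₁ : 0 < U₁) (hU₂ : 0 ≤ U₂) (hU₄ : 0 ≤ U₄) (hκ : 0 < κ)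
    (hlow : ∀ S : Finset V, #S = 2 → q ≤ avoidProb M u (t + T) T S)
    (h₁ : ∀ S : Finset V, #S = 1 → avoidProb M u (t + T) T S ≤ U₁)
    (h₂ : ∀ S : Finset V, #S = 2 → avoidProb M u (t + T) T S ≤ U₂)
    (h₄ : ∀ S : Finset V, #S = 4 → avoidProb M u (t + T) T S ≤ U₄)
    (hedges : 2 * (4 * ρ * r) * (κ * (Fintype.card V * U₁)) + 2 * T * d <
      Fintype.card V * d * q / 2) (t₀ : ℕ) :
    1 - 4 * (U₄ / q ^ 2 + 4 * U₂ / (Fintype.card V * q ^ 2) - 1) - 1 / κ ≤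
      walkProb M u t fun p => bigVacantComponent G p t₀ (3 ^ r) := by
  have hM₀ : ∀ u v, 0 ≤ M u v := hM.1
  have : Nonempty V := ⟨u⟩
  have hle : t + 1 ≤ t + T + 1 := by lia
  have hratio : Fintype.card V * d * (Fintype.card V * d * U₄ + 4 * d * U₂) /
      (Fintype.card V * d * q) ^ 2 = U₄ / q ^ 2 + 4 * U₂ / (Fintype.card V * q ^ 2) := by
    field_simp
  have hYmean : ∑ p : Fin (t + T + 1) → V, pathWeight M u p * #(vacantSet T p) ≤
      Fintype.card V * U₁ := by
    rw [sum_pathWeight_mul_card_vacantSet]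
    refine (sum_le_card_nsmul _ _ _ fun v _ => h₁ {v} (card_singleton v)).trans_eq ?_
    rw [nsmul_eq_mul, card_univ]
  calc 1 - 4 * (U₄ / q ^ 2 + 4 * U₂ / (Fintype.card V * q ^ 2) - 1) - 1 / κ
      ≤ walkProb M u (t + T) fun p => bigVacantComponent G p t₀ (3 ^ r) := by
        rw [← hratio, walkProb_eq_sum_pathWeight]
        refine le_sum_ite_of_moments (pathWeight_nonneg hM₀ u) (sum_pathWeight hM u (t + T))
          (by positivity) (le_sum_pathWeight_mul_card_interedges hG hlow)
          (sum_pathWeight_mul_sq_card_interedges_le hM₀ hG hU₂ hU₄ h₂ h₄)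
          (fun _ => Nat.cast_nonneg _) hκ (by positivity) hYmean fun p hX hY =>
            bigVacantComponent_of_lt_card_interedges hG hconn hρ hP3 hr
              ((lt_of_le_of_lt ?_ hedges).trans_le hX) t₀
        gcongr
    _ ≤ walkProb M u t fun p => bigVacantComponent G p t₀ (3 ^ r) := by
        rw [← walkProb_castLE hM u hle]
        exact walkProb_mono hM₀ u fun p hp => bigVacantComponent_castLE hle hp

end VacantSet

section LazyAvoidance

open Matrix

variable {G : SimpleGraph V} {d : ℕ} {ε ρ g κ : ℝ}

lemma dirichletForm_simpleStep_lower_bound (hG : G.IsRegularOfDegree d) (hconn : G.Connected)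
    (hd : d ≠ 0) (hρ : 0 ≤ ρ) (hP3 : PropP3 G d ε ρ) (h10 : 10 ≤ (d : ℝ) ^ ε) (hg : 0 < g)
    (hgap : SpectralGapLB G d g) (hκd : 16 / d ≤ κ) (hκN : 2 / (g * Fintype.card V) ≤ κ)
    (hκg : 2 * (10 * ρ + 1) ^ 10 / (g * d ^ 5) ≤ κ ^ 2) {S : Finset V} (hS : #S ≤ 4)
    {x : V → ℝ} (hx : ∀ v ∈ S, x v = 0) :
    #S / Fintype.card V * (1 - 4 * κ) * (x ⬝ᵥ x) ≤ dirichletForm (simpleStep G d) x := by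
  have hS' : (#S : ℝ) ≤ 4 := by exact_mod_cast hS
  have hsqrt : (√(d : ℝ))⁻¹ ≤ 1 :=
    inv_le_one_of_one_le₀ (Real.one_le_sqrt.mpr (by exact_mod_cast Nat.one_le_iff_ne_zero.mpr hd))
  have hheat (u v : V) :
      (simpleStep G d ^ (2 * (4 + 1))) u v ≤ (10 * ρ + 1) ^ 10 / (d : ℝ) ^ 5 := by
    have hpow := simpleStep_pow_apply_le hG hconn hd hρ hP3 (R := 10) (by exact_mod_cast h10)
      le_rfl u v
    have hle : (√(d : ℝ))⁻¹ ^ (10 + G.dist u v) ≤ ((d : ℝ) ^ 5)⁻¹ :=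
      calc (√(d : ℝ))⁻¹ ^ (10 + G.dist u v) ≤ (√(d : ℝ))⁻¹ ^ (2 * 5) :=
            pow_le_pow_of_le_one (by positivity) hsqrt (Nat.le_add_right _ _)
        _ = ((d : ℝ) ^ 5)⁻¹ := by rw [pow_mul, inv_pow, Real.sq_sqrt d.cast_nonneg, inv_pow]
    rw [Nat.cast_ofNat] at hpow
    rw [div_eq_mul_inv]
    exact hpow.trans (by gcongr)
  refine dirichletForm_lower_bound_of_forall_mem_eq_zero (k := 4) (by positivity : 0 < 2 * g)
    hgap.hasSpectralGap_simpleStep (simpleStep_mem_doublyStochastic hG hd) (isSymm_simpleStep G d)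
    simpleStep_le hheat (hκd.trans' ?_) (hκN.trans' ?_) (hκg.trans' ?_) hx
  · rw [Nat.cast_ofNat, div_eq_mul_inv, ← mul_assoc]
    gcongr
    linarith
  · calc (#S : ℝ) / (2 * g * Fintype.card V) ≤ 4 / (2 * g * Fintype.card V) := by gcongr
      _ = 2 / (g * Fintype.card V) := by rw [mul_assoc, ← div_div]; norm_num
  · calc #S * ((10 * ρ + 1) ^ 10 / (d : ℝ) ^ 5) / (2 * g)
        ≤ 4 * ((10 * ρ + 1) ^ 10 / (d : ℝ) ^ 5) / (2 * g) := by gcongr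
      _ = 2 * (10 * ρ + 1) ^ 10 / (g * d ^ 5) := by field_simp; norm_num

lemma sum_avoidProb_lazyStep_le [Nonempty V] (hG : G.IsRegularOfDegree d) (hd : d ≠ 0) {δ : ℝ}
    (hδ : δ ≤ 1) {S : Finset V} (hS : ∀ x : V → ℝ, (∀ v ∈ S, x v = 0) →
      #S / Fintype.card V * δ * (x ⬝ᵥ x) ≤ dirichletForm (simpleStep G d) x) (t : ℕ) :
    ∑ v, avoidProb (lazyStep G d) v t 0 S ≤
      Real.exp (-(#S * δ * (t / (2 * Fintype.card V)))) * Fintype.card V := by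
  set c : ℝ := #S / (2 * Fintype.card V) * δ with hc
  have hc₁ : c ≤ 1 := by
    refine (mul_le_of_le_one_right (by positivity) hδ).trans ?_
    have hcard : (#S : ℝ) ≤ Fintype.card V := by exact_mod_cast card_le_univ S
    rw [div_le_one (by positivity)]
    linarith
  refine (sum_avoidProb_le (posSemidef_lazyStep hG hd) hc₁ (fun x hx => ?_) t).trans ?_
  · rw [dirichletForm_lazyStep, hc]
    refine le_trans (le_of_eq ?_) (mul_le_mul_of_nonneg_left (hS x hx) (by norm_num))
    field_simp
  · have hexp : (1 - c) ^ t ≤ Real.exp (-c) ^ t :=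
      pow_le_pow_left₀ (by linarith) (Real.one_sub_le_exp_neg c) t
    rw [← Real.exp_nat_mul] at hexp
    refine mul_le_mul_of_nonneg_right (hexp.trans_eq ?_) (by positivity)
    rw [hc]
    congr 1
    field_simp

lemma exp_neg_div_sub_le {a x : ℝ} (ha : a < x) (hx : 0 < x) :
    Real.exp (-(a / (x - a))) ≤ 1 - a / x := by
  have hpos : 0 < 1 - a / x := by rwa [sub_pos, div_lt_one hx]
  have hxa : x - a ≠ 0 := (sub_pos.mpr ha).ne'
  rw [← Real.le_log_iff_exp_le hpos]
  refine (Real.one_sub_inv_le_log_of_pos hpos).trans_eq' ?_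
  rw [one_sub_div hx.ne', inv_div]
  field_simp
  ring

lemma le_sum_avoidProb_lazyStep (hG : G.IsRegularOfDegree d) (hd : d ≠ 0) {S : Finset V}
    (hS : #S = 2) (hN : 3 < Fintype.card V) (t : ℕ) :
    Real.exp (-(t / (Fintype.card V - 3 : ℝ))) * (Fintype.card V - 2) ≤
      ∑ v, avoidProb (lazyStep G d) v t 0 S := by
  have hN' : (3 : ℝ) < Fintype.card V := by exact_mod_cast hN
  have hexp : Real.exp (-(1 / (Fintype.card V - 3 : ℝ))) ≤
      1 - (1 - 2⁻¹) * #S / (Fintype.card V - #S : ℝ) := by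
    convert exp_neg_div_sub_le (a := 1) (x := Fintype.card V - 2) (by linarith) (by linarith)
      using 2
    · ring_nf
    · norm_num [hS]
  have hlow := le_sum_avoidProb (lazyStep_mem_doublyStochastic hG hd) (posSemidef_lazyStep hG hd)
    two_inv_le_lazyStep_self (S := S) (by rw [hS]; push_cast; linarith)
    ((Real.exp_pos _).le.trans hexp) t
  refine hlow.trans' ?_
  have hpow := pow_le_pow_left₀ (Real.exp_pos _).le hexp t
  rw [← Real.exp_nat_mul, mul_neg, mul_one_div] at hpow
  rw [hS, Nat.cast_ofNat] at hpow ⊢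
  exact mul_le_mul_of_nonneg_right hpow (by linarith)

lemma abs_lazyStep_pow_apply_sub_le (hG : G.IsRegularOfDegree d) (hd : d ≠ 0) (hg : 0 < g)
    (hg₁ : g ≤ 1) (hgap : SpectralGapLB G d g) (hN : 2 ≤ Fintype.card V) {T : ℕ}
    (hT : 2 * Real.log (Fintype.card V) / g ≤ T) (u v : V) :
    |(lazyStep G d ^ T) u v - (Fintype.card V : ℝ)⁻¹| ≤ ((Fintype.card V : ℝ) ^ 2)⁻¹ := by
  have : Nonempty V := ⟨u⟩
  have hN₀ : (0 : ℝ) < Fintype.card V := by positivity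
  have hlog : 0 < Real.log (Fintype.card V) := Real.log_pos (by exact_mod_cast hN)
  have hT₀ : T ≠ 0 := by
    rintro rfl
    have : 0 < 2 * Real.log (Fintype.card V) / g := by positivity
    exact this.not_ge (by exact_mod_cast hT)
  calc |(lazyStep G d ^ T) u v - (Fintype.card V : ℝ)⁻¹|
      ≤ (1 - g) ^ T := abs_pow_apply_sub_inv_card_le (lazyStep_mem_doublyStochastic hG hd)
        (posSemidef_lazyStep hG hd) hg₁ hgap.hasSpectralGap_lazyStep hT₀ u v
    _ ≤ Real.exp (-g) ^ T := pow_le_pow_left₀ (by linarith) (Real.one_sub_le_exp_neg g) T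
    _ = Real.exp (-(T * g)) := by rw [← Real.exp_nat_mul, mul_neg]
    _ ≤ Real.exp (-(2 * Real.log (Fintype.card V))) :=
        Real.exp_le_exp.mpr (neg_le_neg ((div_le_iff₀ hg).mp hT))
    _ = ((Fintype.card V : ℝ) ^ 2)⁻¹ := by
        rw [Real.exp_neg, mul_comm, Real.exp_mul, Real.exp_log hN₀, Real.rpow_ofNat]

section Mixed

variable {T t : ℕ} {θ : ℝ} {S : Finset V}

lemma avoidProb_lazyStep_add_le (hG : G.IsRegularOfDegree d) (hd : d ≠ 0) (hκ : 0 ≤ κ)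
    (hcard : #S ≤ 4) (hS : ∀ x : V → ℝ, (∀ v ∈ S, x v = 0) →
      #S / Fintype.card V * (1 - 4 * κ) * (x ⬝ᵥ x) ≤ dirichletForm (simpleStep G d) x)
    (hmix : ∀ u v, |(lazyStep G d ^ T) u v - (Fintype.card V : ℝ)⁻¹| ≤
      ((Fintype.card V : ℝ) ^ 2)⁻¹)
    (hθ : 1 / Fintype.card V + 16 * κ * (t / (2 * Fintype.card V)) ≤ θ) (u : V) :
    avoidProb (lazyStep G d) u (t + T) T S ≤
      Real.exp θ * Real.exp (-(t / (2 * Fintype.card V))) ^ #S := by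
  have : Nonempty V := ⟨u⟩
  have hsum := sum_avoidProb_lazyStep_le hG hd (by linarith : 1 - 4 * κ ≤ 1) hS t
  set N := (Fintype.card V : ℝ)
  have hN : 0 < N := by positivity
  set β : ℝ := t / (2 * N)
  calc avoidProb (lazyStep G d) u (t + T) T S
      ≤ (N⁻¹ + (N ^ 2)⁻¹) * (Real.exp (-(#S * (1 - 4 * κ) * β)) * N) :=
        (avoidProb_add_le (fun _ _ => nonneg_of_mem_doublyStochastic
          (lazyStep_mem_doublyStochastic hG hd)) hmix u t S).trans (by gcongr)
    _ = (1 / N + 1) * Real.exp (-(#S * (1 - 4 * κ) * β)) := by field_simp; ring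
    _ ≤ Real.exp (1 / N) * Real.exp (-(#S * (1 - 4 * κ) * β)) := by
        gcongr
        exact Real.add_one_le_exp _
    _ = Real.exp (1 / N + 4 * #S * κ * β) * Real.exp (-β) ^ #S := by
        rw [← Real.exp_nat_mul, ← Real.exp_add, ← Real.exp_add]
        ring_nf
    _ ≤ Real.exp (1 / N + 4 * 4 * κ * β) * Real.exp (-β) ^ #S := by
        gcongr
        exact_mod_cast hcard
    _ ≤ Real.exp θ * Real.exp (-β) ^ #S := by
        gcongr
        linarith

lemma le_avoidProb_lazyStep_add (hG : G.IsRegularOfDegree d) (hd : d ≠ 0) (hcard : #S = 2)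
    (hN : 3 < Fintype.card V)
    (hmix : ∀ u v, |(lazyStep G d ^ T) u v - (Fintype.card V : ℝ)⁻¹| ≤
      ((Fintype.card V : ℝ) ^ 2)⁻¹)
    (hθ : (3 + 6 * (t / (2 * Fintype.card V))) / (Fintype.card V - 3 : ℝ) ≤ θ) (u : V) :
    Real.exp (-θ) * Real.exp (-(t / (2 * Fintype.card V))) ^ 2 ≤
      avoidProb (lazyStep G d) u (t + T) T S := by
  have hsum := le_sum_avoidProb_lazyStep hG hd hcard hN t
  have hN' : (3 : ℝ) < Fintype.card V := by exact_mod_cast hN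
  set N := (Fintype.card V : ℝ)
  have hN₀ : 0 < N := by linarith
  have hN₃ : N - 3 ≠ 0 := by linarith
  calc Real.exp (-θ) * Real.exp (-(t / (2 * N))) ^ 2
      ≤ Real.exp (-((3 + 6 * (t / (2 * N))) / (N - 3))) * Real.exp (-(t / (2 * N))) ^ 2 := by
        gcongr
    _ = Real.exp (-(3 / (N - 3))) * Real.exp (-(t / (N - 3))) := by
        rw [← Real.exp_nat_mul, ← Real.exp_add, ← Real.exp_add]
        congr 1
        push_cast
        field_simp
        ring
    _ ≤ (1 - 3 / N) * Real.exp (-(t / (N - 3))) := by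
        gcongr
        exact exp_neg_div_sub_le hN' hN₀
    _ ≤ (N⁻¹ - (N ^ 2)⁻¹) * (N - 2) * Real.exp (-(t / (N - 3))) := by
        gcongr
        have : (N⁻¹ - (N ^ 2)⁻¹) * (N - 2) = 1 - 3 / N + 2 / N ^ 2 := by field_simp; ring
        rw [this]
        exact le_add_of_nonneg_right (by positivity)
    _ = (N⁻¹ - (N ^ 2)⁻¹) * (Real.exp (-(t / (N - 3))) * (N - 2)) := by ring
    _ ≤ (N⁻¹ - (N ^ 2)⁻¹) * ∑ v, avoidProb (lazyStep G d) v t 0 S := by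
        refine mul_le_mul_of_nonneg_left hsum (sub_nonneg.mpr ?_)
        gcongr
        nlinarith
    _ ≤ avoidProb (lazyStep G d) u (t + T) T S := le_avoidProb_add
        (fun _ _ => nonneg_of_mem_doublyStochastic (lazyStep_mem_doublyStochastic hG hd)) hmix u t S

end Mixed

end LazyAvoidance

section LargeParameters

/-- If the spectral gap is `c₁ / D ^ 3`, then the walk avoids a set `S` of at most four vertices
at the rate `#S / (2 N)` per step, up to a relative error of `4 * dirichletError c₁ ρ / D`. -/
def dirichletError (c₁ ρ : ℝ) : ℝ :=
  16 + 2 * (10 * ρ + 1) ^ 10 / c₁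

/-- A bound for the error in the exponent of the probability that the walk avoids at most four
vertices for `2 N log D` steps. -/
def avoidanceError (c₁ ρ D : ℝ) : ℝ :=
  (4 + (16 * dirichletError c₁ ρ + 6) * Real.log D) / D

/-- The inequalities between the number `N` of vertices, the degree `D` and the exponent `ε` that
make the second moment argument work. They hold for all members of the sequence of graphs but
finitely many, `c` being the fifth power of the constant of property P2. -/
structure LargeParameters (c₁ c ρ ε D N : ℝ) : Prop where
  eight_le : 8 ≤ N
  two_le : 2 ≤ D
  pow_four_le : D ^ 4 ≤ N
  pow_five_mul_log_le : D ^ 5 * Real.log N ≤ c * N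
  le_pow_three : c₁ ≤ D ^ 3
  ten_le_rpow : 10 ≤ D ^ ε
  mul_le_rpow : 128 * ρ ≤ D ^ (ε / 4)
  lt_rpow_sq : 8 * (4 * c / c₁ + 2) < (D ^ ε) ^ 2
  avoidanceError_le : avoidanceError c₁ ρ D ≤ 1 / 4

lemma pow_le_dirichletError_mul {c₁ ρ : ℝ} (hc₁ : 0 < c₁) :
    2 * (10 * ρ + 1) ^ 10 ≤ dirichletError c₁ ρ * c₁ := by
  rw [dirichletError, add_mul, div_mul_cancel₀ _ hc₁.ne']
  linarith

lemma sixteen_le_dirichletError {c₁ ρ : ℝ} (hc₁ : 0 ≤ c₁) : 16 ≤ dirichletError c₁ ρ :=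
  le_add_of_nonneg_right (div_nonneg (by positivity) hc₁)

lemma half_le_exp_neg {θ : ℝ} (hθ : θ ≤ 1 / 4) : 1 / 2 ≤ Real.exp (-θ) := by
  linarith [Real.one_sub_le_exp_neg θ]

lemma exp_le_two {θ : ℝ} (hθ : θ ≤ 1 / 4) : Real.exp θ ≤ 2 := by
  have h := inv_anti₀ (by norm_num) (half_le_exp_neg hθ)
  rwa [Real.exp_neg, inv_inv, one_div, inv_inv] at h

lemma exp_half_mul_le_three_pow_floor {x : ℝ} (hx : 2 ≤ x) : Real.exp (1 / 2 * x) ≤ 3 ^ ⌊x⌋₊ :=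
  calc Real.exp (1 / 2 * x) ≤ Real.exp (⌊x⌋₊ * 1) :=
        Real.exp_le_exp.mpr (by linarith [Nat.sub_one_lt_floor x])
    _ = Real.exp 1 ^ ⌊x⌋₊ := Real.exp_nat_mul 1 _
    _ ≤ 3 ^ ⌊x⌋₊ := by
        gcongr
        exact Real.exp_one_lt_three.le

namespace LargeParameters

variable {c₁ c ρ ε D N : ℝ}

lemma pos (h : LargeParameters c₁ c ρ ε D N) : 0 < D := by linarith [h.two_le]

lemma add_three_le (h : LargeParameters c₁ c ρ ε D N) : D + 3 ≤ N := by
  have hD := h.two_le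
  have hD₃ : 2 ^ 3 ≤ D ^ 3 := by gcongr
  nlinarith [h.pow_four_le]

lemma rpow_quarter_pow_four (h : LargeParameters c₁ c ρ ε D N) : (D ^ (ε / 4)) ^ 4 = D ^ ε := by
  rw [← Real.rpow_mul_natCast h.pos.le, Nat.cast_ofNat, div_mul_cancel₀ _ (by norm_num)]

lemma rpow_quarter_sq (h : LargeParameters c₁ c ρ ε D N) :
    (D ^ (ε / 4)) ^ 2 = D ^ (ε / 2) := by
  rw [← Real.rpow_mul_natCast h.pos.le, Nat.cast_ofNat]
  ring_nf

lemma rpow_half_sq (h : LargeParameters c₁ c ρ ε D N) : (D ^ (ε / 2)) ^ 2 = D ^ ε := by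
  rw [← h.rpow_quarter_sq, ← pow_mul, h.rpow_quarter_pow_four]

lemma two_le_rpow_half (h : LargeParameters c₁ c ρ ε D N) : 2 ≤ D ^ (ε / 2) := by
  have hD := h.pos
  by_contra! hlt
  have : (D ^ (ε / 2)) ^ 2 < 2 ^ 2 := by gcongr
  rw [h.rpow_half_sq] at this
  linarith [h.ten_le_rpow]

lemma rpow_half_le (h : LargeParameters c₁ c ρ ε D N) : D ^ (ε / 2) ≤ D ^ ε := by
  rw [← h.rpow_half_sq]
  exact le_self_pow₀ (by linarith [h.two_le_rpow_half]) two_ne_zero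

lemma rpow_le_mul_exp_neg (h : LargeParameters c₁ c ρ ε D N) {β : ℝ}
    (hβ : β ≤ (1 - ε) * Real.log D) : D ^ ε ≤ D * Real.exp (-β) :=
  calc D ^ ε = Real.exp (Real.log D * ε) := Real.rpow_def_of_pos h.pos ε
    _ ≤ Real.exp (Real.log D + -β) := Real.exp_le_exp.mpr (by linarith)
    _ = D * Real.exp (-β) := by rw [Real.exp_add, Real.exp_log h.pos]

lemma one_le_mul_exp_neg (h : LargeParameters c₁ c ρ ε D N) {β : ℝ}
    (hβ : β ≤ (1 - ε) * Real.log D) : 1 ≤ D * Real.exp (-β) := by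
  linarith [h.ten_le_rpow, h.rpow_le_mul_exp_neg hβ]

lemma le_log (h : LargeParameters c₁ c ρ ε D N) {β : ℝ} (hβ : β ≤ (1 - ε) * Real.log D) :
    β ≤ Real.log D := by
  rw [Real.le_log_iff_exp_le h.pos, ← one_le_div (Real.exp_pos β), div_eq_mul_inv,
    ← Real.exp_neg]
  exact h.one_le_mul_exp_neg hβ

lemma two_div_gap_mul_le (h : LargeParameters c₁ c ρ ε D N) (hc₁ : 0 < c₁) (hρ : 0 ≤ ρ) :
    2 / (c₁ / D ^ 3 * N) ≤ dirichletError c₁ ρ / D := by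
  have hD := h.pos
  calc 2 / (c₁ / D ^ 3 * N) ≤ 2 / (c₁ / D ^ 3 * D ^ 4) := by
        gcongr
        exact h.pow_four_le
    _ = 2 / c₁ / D := by field_simp
    _ ≤ dirichletError c₁ ρ / D := by
        gcongr
        rw [div_le_iff₀ hc₁]
        have : 1 ≤ (10 * ρ + 1) ^ 10 := one_le_pow₀ (by linarith)
        linarith [pow_le_dirichletError_mul (ρ := ρ) hc₁]

lemma heat_div_gap_le (h : LargeParameters c₁ c ρ ε D N) (hc₁ : 0 < c₁) :
    2 * (10 * ρ + 1) ^ 10 / (c₁ / D ^ 3 * D ^ 5) ≤ (dirichletError c₁ ρ / D) ^ 2 := by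
  have hD := h.pos
  have hC := sixteen_le_dirichletError (ρ := ρ) hc₁.le
  calc 2 * (10 * ρ + 1) ^ 10 / (c₁ / D ^ 3 * D ^ 5) = 2 * (10 * ρ + 1) ^ 10 / c₁ / D ^ 2 := by
        field_simp
    _ ≤ dirichletError c₁ ρ / D ^ 2 := by
        gcongr
        exact (div_le_iff₀ hc₁).mpr (pow_le_dirichletError_mul hc₁)
    _ ≤ dirichletError c₁ ρ ^ 2 / D ^ 2 := by
        gcongr
        exact le_self_pow₀ (by linarith) two_ne_zero
    _ = (dirichletError c₁ ρ / D) ^ 2 := (div_pow _ _ 2).symm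

lemma inv_add_mul_le_avoidanceError (h : LargeParameters c₁ c ρ ε D N) (hc₁ : 0 < c₁) {β : ℝ}
    (hβ : β ≤ Real.log D) :
    1 / N + 16 * (dirichletError c₁ ρ / D) * β ≤ avoidanceError c₁ ρ D := by
  have hD := h.pos
  have hC := sixteen_le_dirichletError (ρ := ρ) hc₁.le
  have hlog : 0 ≤ Real.log D := Real.log_nonneg (by linarith [h.two_le])
  calc 1 / N + 16 * (dirichletError c₁ ρ / D) * β
      ≤ 1 / D + 16 * (dirichletError c₁ ρ / D) * Real.log D := by
        gcongr
        linarith [h.add_three_le]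
    _ ≤ 1 / D + 16 * (dirichletError c₁ ρ / D) * Real.log D + (3 + 6 * Real.log D) / D :=
        le_add_of_nonneg_right (by positivity)
    _ = avoidanceError c₁ ρ D := by rw [avoidanceError]; ring

lemma div_sub_three_le_avoidanceError (h : LargeParameters c₁ c ρ ε D N) (hc₁ : 0 < c₁) {β : ℝ}
    (hβ : β ≤ Real.log D) : (3 + 6 * β) / (N - 3) ≤ avoidanceError c₁ ρ D := by
  have hD := h.pos
  have hC := sixteen_le_dirichletError (ρ := ρ) hc₁.le
  have hlog : 0 ≤ Real.log D := Real.log_nonneg (by linarith [h.two_le])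
  have hN : D ≤ N - 3 := by linarith [h.add_three_le]
  calc (3 + 6 * β) / (N - 3) ≤ (3 + 6 * Real.log D) / D := by gcongr
    _ ≤ (3 + 6 * Real.log D) / D + (1 / D + 16 * (dirichletError c₁ ρ / D) * Real.log D) :=
        le_add_of_nonneg_right (by positivity)
    _ = avoidanceError c₁ ρ D := by rw [avoidanceError]; ring

lemma bulk_le (h : LargeParameters c₁ c ρ ε D N) (hρ : 0 ≤ ρ) {P θ r : ℝ} (hP : 0 ≤ P)
    (hDP : D ^ ε ≤ D * P) (hθ : θ ≤ 1 / 4) (hr : r ≤ D ^ (ε / 2)) :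
    2 * (4 * ρ * r) * (D ^ (ε / 4) * (N * (Real.exp θ * P))) ≤ N * D * P ^ 2 / 8 := by
  have hN : 0 < N := by linarith [h.eight_le]
  have hD := h.pos
  rw [← h.rpow_quarter_pow_four] at hDP
  rw [← h.rpow_quarter_sq] at hr
  have hk := h.mul_le_rpow
  have hk₀ : 0 < D ^ (ε / 4) := by positivity
  set k := D ^ (ε / 4)
  calc 2 * (4 * ρ * r) * (k * (N * (Real.exp θ * P)))
      ≤ 2 * (4 * ρ * k ^ 2) * (k * (N * (2 * P))) := by
        gcongr
        exact exp_le_two hθ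
    _ = 128 * ρ * (k ^ 3 * N * P / 8) := by ring
    _ ≤ k * (k ^ 3 * N * P / 8) := by gcongr
    _ = k ^ 4 * (N * P / 8) := by ring
    _ ≤ D * P * (N * P / 8) := by gcongr
    _ = N * D * P ^ 2 / 8 := by ring

lemma early_lt (h : LargeParameters c₁ c ρ ε D N) (hc₁ : 0 < c₁) {P T : ℝ}
    (hDP : D ^ ε ≤ D * P) (hT : T ≤ 2 * Real.log N / (c₁ / D ^ 3) + 1) :
    2 * T * D < N * D * P ^ 2 / 8 := by
  have hN : 0 < N := by linarith [h.eight_le]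
  have hD := h.pos
  have hD₂ : D ^ 2 ≤ N :=
    (pow_le_pow_right₀ (by linarith [h.two_le]) (by norm_num)).trans h.pow_four_le
  have hlog := h.pow_five_mul_log_le
  have hsq : (D ^ ε) ^ 2 ≤ (D * P) ^ 2 := by gcongr
  calc 2 * T * D ≤ 2 * (2 * Real.log N / (c₁ / D ^ 3) + 1) * D := by gcongr
    _ = 4 / c₁ * (D ^ 5 * Real.log N) / D + 2 * D ^ 2 / D := by field_simp; ring
    _ ≤ 4 / c₁ * (c * N) / D + 2 * N / D := by
        refine add_le_add ?_ (by gcongr)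
        exact div_le_div_of_nonneg_right (mul_le_mul_of_nonneg_left hlog (by positivity)) hD.le
    _ = (4 * c / c₁ + 2) * (N / D) := by ring
    _ < (D * P) ^ 2 / 8 * (N / D) := by
        gcongr
        linarith [h.lt_rpow_sq]
    _ = N * D * P ^ 2 / 8 := by field_simp

lemma four_div_le (h : LargeParameters c₁ c ρ ε D N) {P : ℝ} (hP : 0 < P) (hDP : 1 ≤ D * P) :
    4 / (N * P ^ 2) ≤ 4 * (D ^ 2 / N) := by
  have hN : 0 < N := by linarith [h.eight_le]
  have hDP₂ : 1 ≤ (D * P) ^ 2 := one_le_pow₀ hDP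
  rw [div_le_iff₀ (by positivity)]
  calc (4 : ℝ) ≤ 4 * (D * P) ^ 2 := by linarith
    _ = 4 * (D ^ 2 / N) * (N * P ^ 2) := by field_simp

lemma bulk_add_early_lt (h : LargeParameters c₁ c ρ ε D N) (hc₁ : 0 < c₁) (hρ : 0 ≤ ρ)
    {P θ r T : ℝ} (hP : 0 ≤ P) (hDP : D ^ ε ≤ D * P) (hθ : θ ≤ 1 / 4) (hr : r ≤ D ^ (ε / 2))
    (hT : T ≤ 2 * Real.log N / (c₁ / D ^ 3) + 1) :
    2 * (4 * ρ * r) * (D ^ (ε / 4) * (N * (Real.exp θ * P))) + 2 * T * D <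
      N * D * (Real.exp (-θ) * P ^ 2) / 2 := by
  have hN : 0 < N := by linarith [h.eight_le]
  have hD := h.pos
  calc 2 * (4 * ρ * r) * (D ^ (ε / 4) * (N * (Real.exp θ * P))) + 2 * T * D
      < N * D * P ^ 2 / 8 + N * D * P ^ 2 / 8 :=
        add_lt_add_of_le_of_lt (h.bulk_le hρ hP hDP hθ hr) (h.early_lt hc₁ hDP hT)
    _ = N * D * (1 / 2 * P ^ 2) / 2 := by ring
    _ ≤ N * D * (Real.exp (-θ) * P ^ 2) / 2 := by
        gcongr
        exact half_le_exp_neg hθ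

end LargeParameters

end LargeParameters

section GiantComponent

open Matrix

variable {G : SimpleGraph V} {d : ℕ} {ε ρ : ℝ}

lemma le_walkProb_bigVacantComponent_of_avoidProb_bounds {M : Matrix V V ℝ} {P θ κ : ℝ}
    {r t T : ℕ} {u : V} (hM : M ∈ rowStochastic ℝ V) (hG : G.IsRegularOfDegree d)
    (hconn : G.Connected) (hd : d ≠ 0) (hρ : 0 < ρ) (hP3 : PropP3 G d ε ρ)
    (hr : (r : ℝ) ≤ (d : ℝ) ^ ε) (hP : 0 < P) (hκ : 0 < κ)
    (hlow : ∀ S : Finset V, #S = 2 → Real.exp (-θ) * P ^ 2 ≤ avoidProb M u (t + T) T S)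
    (hup : ∀ S : Finset V, #S ≤ 4 → avoidProb M u (t + T) T S ≤ Real.exp θ * P ^ #S)
    (hedges : 2 * (4 * ρ * r) * (κ * (Fintype.card V * (Real.exp θ * P))) + 2 * T * d <
      Fintype.card V * d * (Real.exp (-θ) * P ^ 2) / 2) (t₀ : ℕ) :
    1 - 4 * (Real.exp (3 * θ) * (1 + 4 / (Fintype.card V * P ^ 2)) - 1) - 1 / κ ≤
      walkProb M u t fun p => bigVacantComponent G p t₀ (3 ^ r) := by
  have hupper {m : ℕ} (hm : m ≤ 4) (S : Finset V) (hS : #S = m) :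
      avoidProb M u (t + T) T S ≤ Real.exp θ * P ^ m := hS ▸ hup S (hS.trans_le hm)
  have hcube : Real.exp (3 * θ) = Real.exp θ / Real.exp (-θ) ^ 2 := by
    rw [← Real.exp_nat_mul, ← Real.exp_sub]
    congr 1
    push_cast
    ring
  have : Nonempty V := ⟨u⟩
  refine (le_walkProb_bigVacantComponent hM hG hconn hd hρ hP3 hr (by positivity) (by positivity)
    (by positivity) (by positivity) hκ hlow
    (fun S hS => (hupper (by norm_num) S hS).trans_eq (by rw [pow_one]))
    (hupper (by norm_num)) (hupper le_rfl) hedges t₀).trans_eq' ?_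
  rw [hcube]
  field_simp

variable {c₁ c : ℝ} {t T : ℕ}

lemma LargeParameters.abs_pow_sub_inv_card_le (hG : G.IsRegularOfDegree d)
    (hc₁ : 0 < c₁) (hgap : SpectralGapLB G d (c₁ / (d : ℝ) ^ 3))
    (h : LargeParameters c₁ c ρ ε d (Fintype.card V))
    (hT : 2 * Real.log (Fintype.card V) / (c₁ / (d : ℝ) ^ 3) ≤ T) (u v : V) :
    |(lazyStep G d ^ T) u v - (Fintype.card V : ℝ)⁻¹| ≤ ((Fintype.card V : ℝ) ^ 2)⁻¹ := by
  have hd := h.pos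
  have hN : (2 : ℝ) ≤ Fintype.card V := by linarith [h.eight_le]
  exact abs_lazyStep_pow_apply_sub_le hG (by exact_mod_cast hd.ne') (by positivity)
    ((div_le_one (by positivity)).mpr h.le_pow_three) hgap (by exact_mod_cast hN) hT u v

lemma LargeParameters.avoidProb_le (hG : G.IsRegularOfDegree d)
    (hconn : G.Connected) (hρ : 0 ≤ ρ) (hP3 : PropP3 G d ε ρ) (hc₁ : 0 < c₁)
    (hgap : SpectralGapLB G d (c₁ / (d : ℝ) ^ 3))
    (h : LargeParameters c₁ c ρ ε d (Fintype.card V))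
    (hT : 2 * Real.log (Fintype.card V) / (c₁ / (d : ℝ) ^ 3) ≤ T)
    (ht : (t / (2 * Fintype.card V) : ℝ) ≤ (1 - ε) * Real.log d) (u : V) {S : Finset V}
    (hS : #S ≤ 4) :
    avoidProb (lazyStep G d) u (t + T) T S ≤
      Real.exp (avoidanceError c₁ ρ d) * Real.exp (-(t / (2 * Fintype.card V))) ^ #S := by
  have hd := h.pos
  have hd₀ : d ≠ 0 := by exact_mod_cast hd.ne'
  have hC := sixteen_le_dirichletError (ρ := ρ) hc₁.le
  exact avoidProb_lazyStep_add_le hG hd₀ (by positivity) hS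
    (fun _ => dirichletForm_simpleStep_lower_bound hG hconn hd₀ hρ hP3 h.ten_le_rpow
      (by positivity) hgap (by gcongr) (h.two_div_gap_mul_le hc₁ hρ) (h.heat_div_gap_le hc₁) hS)
    (h.abs_pow_sub_inv_card_le hG hc₁ hgap hT)
    (h.inv_add_mul_le_avoidanceError hc₁ (h.le_log ht)) u

lemma LargeParameters.le_avoidProb (hG : G.IsRegularOfDegree d)
    (hc₁ : 0 < c₁) (hgap : SpectralGapLB G d (c₁ / (d : ℝ) ^ 3))
    (h : LargeParameters c₁ c ρ ε d (Fintype.card V))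
    (hT : 2 * Real.log (Fintype.card V) / (c₁ / (d : ℝ) ^ 3) ≤ T)
    (ht : (t / (2 * Fintype.card V) : ℝ) ≤ (1 - ε) * Real.log d) (u : V) {S : Finset V}
    (hS : #S = 2) :
    Real.exp (-avoidanceError c₁ ρ d) * Real.exp (-(t / (2 * Fintype.card V))) ^ 2 ≤
      avoidProb (lazyStep G d) u (t + T) T S := by
  have hd := h.pos
  have hN : (3 : ℝ) < Fintype.card V := by linarith [h.eight_le]
  exact le_avoidProb_lazyStep_add hG (by exact_mod_cast hd.ne') hS (by exact_mod_cast hN)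
    (h.abs_pow_sub_inv_card_le hG hc₁ hgap hT)
    (h.div_sub_three_le_avoidanceError hc₁ (h.le_log ht)) u

theorem le_walkProb_lazyStep_bigVacantComponent (hG : G.IsRegularOfDegree d)
    (hconn : G.Connected) (hρ : 0 < ρ) (hP3 : PropP3 G d ε ρ) (hc₁ : 0 < c₁)
    (hgap : SpectralGapLB G d (c₁ / (d : ℝ) ^ 3))
    (h : LargeParameters c₁ c ρ ε d (Fintype.card V))
    (ht : (t : ℝ) ≤ 2 * ((1 - ε) * (Fintype.card V * Real.log d))) (u : V) (t₀ : ℕ) :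
    1 - 4 * (Real.exp (3 * avoidanceError c₁ ρ d) *
        (1 + 4 * ((d : ℝ) ^ 2 / Fintype.card V)) - 1) - 1 / (d : ℝ) ^ (ε / 4) ≤
      walkProb (lazyStep G d) u t
        fun p => bigVacantComponent G p t₀ (Real.exp (1 / 2 * (d : ℝ) ^ (ε / 2))) := by
  have hd := h.pos
  have hd₀ : d ≠ 0 := by exact_mod_cast hd.ne'
  have hN : (0 : ℝ) < Fintype.card V := by linarith [h.eight_le]
  have hM := mem_rowStochastic_of_mem_doublyStochastic (lazyStep_mem_doublyStochastic hG hd₀)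
  have hβ : (t / (2 * Fintype.card V) : ℝ) ≤ (1 - ε) * Real.log d := by
    rw [div_le_iff₀ (by positivity)]
    linarith
  have hfloor : (⌊(d : ℝ) ^ (ε / 2)⌋₊ : ℝ) ≤ (d : ℝ) ^ (ε / 2) := Nat.floor_le (by positivity)
  have hT := Nat.le_ceil (2 * Real.log (Fintype.card V) / (c₁ / (d : ℝ) ^ 3))
  have : 0 ≤ Real.log (Fintype.card V) := Real.log_nonneg (by linarith [h.eight_le])
  have hT' := Nat.ceil_lt_add_one
    (by positivity : 0 ≤ 2 * Real.log (Fintype.card V) / (c₁ / (d : ℝ) ^ 3))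
  have hbound := le_walkProb_bigVacantComponent_of_avoidProb_bounds hM hG hconn hd₀ hρ hP3
    (hfloor.trans h.rpow_half_le) (Real.exp_pos _) (by positivity : 0 < (d : ℝ) ^ (ε / 4))
    (fun S hS => h.le_avoidProb hG hc₁ hgap hT hβ u hS)
    (fun S hS => h.avoidProb_le hG hconn hρ.le hP3 hc₁ hgap hT hβ u hS)
    (h.bulk_add_early_lt hc₁ hρ.le (Real.exp_pos _).le (h.rpow_le_mul_exp_neg hβ)
      h.avoidanceError_le hfloor hT'.le) t₀
  refine (hbound.trans' ?_).trans (walkProb_mono (fun _ _ => nonneg_of_mem_rowStochastic hM) u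
    fun p ⟨S, hS, hSconn, hcard⟩ => ⟨S, hS, hSconn,
      (exp_half_mul_le_three_pow_floor h.two_le_rpow_half).trans hcard⟩)
  have hsq : 4 / (Fintype.card V * Real.exp (-(t / (2 * Fintype.card V))) ^ 2) ≤
      4 * ((d : ℝ) ^ 2 / Fintype.card V) := h.four_div_le (Real.exp_pos _)
        (h.one_le_mul_exp_neg hβ)
  gcongr

end GiantComponent

section Asymptotics

variable {ι : Type*} {l : Filter ι} {D N ε : ι → ℝ} {c : ℝ}

lemma tendsto_rpow_mul_atTop (hD : Tendsto D l atTop)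
    (hε : Tendsto (fun i => ε i * Real.log (D i)) l atTop) {a : ℝ} (ha : 0 < a) :
    Tendsto (fun i => D i ^ (ε i * a)) l atTop := by
  refine (Real.tendsto_exp_atTop.comp (hε.atTop_mul_const ha)).congr' ?_
  filter_upwards [hD.eventually_gt_atTop 0] with i hi
  rw [Real.rpow_def_of_pos hi, Function.comp_apply]
  ring_nf

lemma pow_five_mul_log_le {D N : ℝ} (hD : 0 ≤ D) (hN : 1 < N)
    (h : D ≤ c * (N / Real.log N) ^ ((1 : ℝ) / 5)) : D ^ 5 * Real.log N ≤ c ^ 5 * N := by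
  have hlog : 0 < Real.log N := Real.log_pos hN
  have hroot : ((N / Real.log N) ^ ((1 : ℝ) / 5)) ^ 5 = N / Real.log N := by
    rw [← Real.rpow_mul_natCast (by positivity)]
    norm_num
  have hpow := pow_le_pow_left₀ hD h 5
  rwa [mul_pow, hroot, ← mul_div_assoc, le_div_iff₀ hlog] at hpow

lemma eventually_pow_four_le (hD : Tendsto D l atTop) (hN : Tendsto N l atTop)
    (h : ∀ᶠ i in l, D i ^ 5 * Real.log (N i) ≤ c * N i) : ∀ᶠ i in l, D i ^ 4 ≤ N i := by
  filter_upwards [h, hD.eventually_gt_atTop 0, hD.eventually_ge_atTop c,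
    hN.eventually_ge_atTop 0,
    (Real.tendsto_log_atTop.comp hN).eventually_ge_atTop 1] with i hi hD₀ hDc hN₀ hlog
  refine le_of_mul_le_mul_left ?_ hD₀
  calc D i * D i ^ 4 = D i ^ 5 * 1 := by ring
    _ ≤ D i ^ 5 * Real.log (N i) := by gcongr; exact hlog
    _ ≤ c * N i := hi
    _ ≤ D i * N i := by gcongr

lemma tendsto_sq_div_zero (hD : Tendsto D l atTop) (h : ∀ᶠ i in l, D i ^ 4 ≤ N i) :
    Tendsto (fun i => D i ^ 2 / N i) l (nhds 0) := by
  have hinv : Tendsto (fun i => (D i ^ 2)⁻¹) l (nhds 0) :=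
    tendsto_inv_atTop_zero.comp ((tendsto_pow_atTop two_ne_zero).comp hD)
  refine squeeze_zero' ?_ ?_ hinv
  · filter_upwards [h, hD.eventually_gt_atTop 0] with i hi hD₀
    have : 0 < N i := (by positivity : 0 < D i ^ 4).trans_le hi
    positivity
  · filter_upwards [h, hD.eventually_gt_atTop 0] with i hi hD₀
    calc D i ^ 2 / N i ≤ D i ^ 2 / D i ^ 4 := by gcongr
      _ = (D i ^ 2)⁻¹ := by field_simp

lemma tendsto_avoidanceError (c₁ ρ : ℝ) : Tendsto (avoidanceError c₁ ρ) atTop (nhds 0) := by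
  have hlog : Tendsto (fun D => Real.log D / D) atTop (nhds 0) :=
    Real.isLittleO_log_id_atTop.tendsto_div_nhds_zero
  have hsum := (tendsto_inv_atTop_zero.const_mul (4 : ℝ)).add
    (hlog.const_mul (16 * dirichletError c₁ ρ + 6))
  simp only [mul_zero, add_zero] at hsum
  refine hsum.congr fun D => ?_
  rw [avoidanceError]
  ring

lemma tendsto_one_sub_errors {θ x y : ι → ℝ} (hθ : Tendsto θ l (nhds 0))
    (hx : Tendsto x l (nhds 0)) (hy : Tendsto y l atTop) :
    Tendsto (fun i => 1 - 4 * (Real.exp (3 * θ i) * (1 + 4 * x i) - 1) - 1 / y i) l (nhds 1) := by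
  have hexp : Tendsto (fun i => Real.exp (3 * θ i)) l (nhds (Real.exp (3 * 0))) :=
    (Real.continuous_exp.tendsto _).comp (hθ.const_mul 3)
  have hlim := ((((hexp.mul ((hx.const_mul 4).const_add 1)).sub_const 1).const_mul 4).const_sub
    1).sub (hy.const_div_atTop 1)
  simpa only [mul_zero, Real.exp_zero, add_zero, mul_one, sub_self, sub_zero] using hlim

lemma eventually_largeParameters (hD : Tendsto D l atTop) (hN : Tendsto N l atTop)
    (hε : Tendsto (fun i => ε i * Real.log (D i)) l atTop)
    (h : ∀ᶠ i in l, D i ^ 5 * Real.log (N i) ≤ c * N i) (c₁ ρ : ℝ) :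
    ∀ᶠ i in l, LargeParameters c₁ c ρ (ε i) (D i) (N i) := by
  have hrpow : Tendsto (fun i => D i ^ ε i) l atTop := by
    simpa only [mul_one] using tendsto_rpow_mul_atTop hD hε one_pos
  filter_upwards [hN.eventually_ge_atTop 8, hD.eventually_ge_atTop 2,
    eventually_pow_four_le hD hN h, h,
    ((tendsto_pow_atTop three_ne_zero).comp hD).eventually_ge_atTop c₁,
    hrpow.eventually_ge_atTop 10,
    (tendsto_rpow_mul_atTop hD hε (a := 4⁻¹) (by norm_num)).eventually_ge_atTop (128 * ρ),
    ((tendsto_pow_atTop two_ne_zero).comp hrpow).eventually_gt_atTop (8 * (4 * c / c₁ + 2)),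
    ((tendsto_avoidanceError c₁ ρ).comp hD).eventually_le_const (by norm_num : (0 : ℝ) < 1 / 4)]
    with i h₁ h₂ h₃ h₄ h₅ h₆ h₇ h₈ h₉
  exact ⟨h₁, h₂, h₃, h₄, h₅, h₆, h₇, h₈, h₉⟩

end Asymptotics

lemma SpectralGapLB.mono {G : SimpleGraph V} {d : ℕ} {g g' : ℝ} (h : SpectralGapLB G d g)
    (hg : g' ≤ g) : SpectralGapLB G d g' := fun x hx =>
  (h x hx).trans (mul_le_mul_of_nonneg_right (sub_le_sub_left hg 1)
    (sum_nonneg fun v _ => sq_nonneg (x v)))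

lemma SpectralGapLB.of_rpow {G : SimpleGraph V} {d : ℕ} {c₁ ρ₁ : ℝ} (hd : 1 ≤ d) (hc₁ : 0 ≤ c₁)
    (hρ₁ : ρ₁ ≤ 3) (h : SpectralGapLB G d (c₁ / (d : ℝ) ^ ρ₁)) :
    SpectralGapLB G d (c₁ / (d : ℝ) ^ 3) := by
  have hd' : (1 : ℝ) ≤ d := by exact_mod_cast hd
  refine h.mono ?_
  rw [← Real.rpow_ofNat]
  gcongr

theorem lazy_vacant_giant_component_general {ι : Type*} {l : Filter ι} {V : ι → Type*}
    [∀ i, Fintype (V i)] [∀ i, DecidableEq (V i)] (G : ∀ i, SimpleGraph (V i)) (d : ι → ℕ)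
    (ε : ι → ℝ) (u : ∀ i, V i) (t : ι → ℕ) (t₀ : ℕ) (hreg : ∀ i, (G i).IsRegularOfDegree (d i))
    (hconn : ∀ i, (G i).Connected) (hd : Tendsto (fun i => (d i : ℝ)) l atTop)
    (hεd : Tendsto (fun i => ε i * Real.log (d i)) l atTop)
    (ht : ∀ i, (t i : ℝ) ≤ 2 * ((1 - ε i) * (Fintype.card (V i) * Real.log (d i))))
    (hP1 : ∃ c₁ ρ₁ : ℝ, 0 < c₁ ∧ ρ₁ ≤ 3 ∧
      ∀ i, SpectralGapLB (G i) (d i) (c₁ / (d i : ℝ) ^ ρ₁))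
    (hP2 : ∃ c₂ : ℝ, ∀ᶠ i in l, (d i : ℝ) ≤
      c₂ * (Fintype.card (V i) / Real.log (Fintype.card (V i))) ^ ((1 : ℝ) / 5))
    (hP3 : ∃ ρ₂ : ℝ, 0 < ρ₂ ∧ ∀ i, PropP3 (G i) (d i) (ε i) ρ₂) :
    Tendsto (fun i => walkProb (lazyStep (G i) (d i)) (u i) (t i)
      fun p => bigVacantComponent (G i) p t₀ (Real.exp (1 / 2 * (d i : ℝ) ^ (ε i / 2))))
      l (nhds 1) := by
  obtain ⟨c₁, ρ₁, hc₁, hρ₁, hgap⟩ := hP1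
  obtain ⟨c₂, hP2⟩ := hP2
  obtain ⟨ρ, hρ, hP3⟩ := hP3
  have hN : Tendsto (fun i => (Fintype.card (V i) : ℝ)) l atTop :=
    tendsto_atTop_mono (fun i => by
      exact_mod_cast ((hreg i (u i)).symm.trans_lt ((G i).degree_lt_card_verts (u i))).le) hd
  have hlog : ∀ᶠ i in l, (d i : ℝ) ^ 5 * Real.log (Fintype.card (V i)) ≤
      c₂ ^ 5 * Fintype.card (V i) := by
    filter_upwards [hP2, hN.eventually_gt_atTop 1] with i hi hN₁
    exact pow_five_mul_log_le (Nat.cast_nonneg _) hN₁ hi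
  have hlower := tendsto_one_sub_errors ((tendsto_avoidanceError c₁ ρ).comp hd)
    (tendsto_sq_div_zero hd (eventually_pow_four_le hd hN hlog))
    (tendsto_rpow_mul_atTop hd hεd (a := 4⁻¹) (by norm_num))
  refine tendsto_of_tendsto_of_tendsto_of_le_of_le' hlower tendsto_const_nhds ?_ ?_
  · filter_upwards [eventually_largeParameters hd hN hεd hlog c₁ ρ] with i h
    have hd₁ : 1 ≤ d i := by exact_mod_cast one_le_two.trans h.two_le
    exact le_walkProb_lazyStep_bigVacantComponent (hreg i) (hconn i) hρ (hP3 i) hc₁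
      ((hgap i).of_rpow hd₁ hc₁.le hρ₁) h (ht i) (u i) t₀
  · filter_upwards [hd.eventually_gt_atTop 0] with i hi
    exact walkProb_le_one (mem_rowStochastic_of_mem_doublyStochastic
      (lazyStep_mem_doublyStochastic (hreg i) (by exact_mod_cast hi.ne'))) _ _ _

/-- **Lemma 8**: with `t₋ = (1-ε) n ln d`, for a sequence of connected
`d`-regular graphs satisfying P1–P4, w.h.p. the set of vertices unvisited by
the lazy walk during `[1, 2t₋]` induces a connected component with at least
`exp(c·d^(ε/2))` vertices.  (The `n`-th graph has `n + 1` vertices.) -/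
theorem lazy_vacant_giant_component
    (G : ∀ n : ℕ, SimpleGraph (Fin (n + 1))) (d : ℕ → ℕ) (ε : ℕ → ℝ)
    (u : ∀ n : ℕ, Fin (n + 1))
    (hreg : ∀ n, (G n).IsRegularOfDegree (d n))
    (hconn : ∀ n, (G n).Connected)
    (hd : Tendsto (fun n => (d n : ℝ)) atTop atTop)
    (hε : ∀ n, 0 < ε n ∧ ε n < 1)
    (hεd : Tendsto (fun n => ε n * Real.log (d n)) atTop atTop)
    (hP1 : ∃ c₁ ρ₁ : ℝ, 0 < c₁ ∧ 0 < ρ₁ ∧ ρ₁ ≤ 3 ∧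
      ∀ n, SpectralGapLB (G n) (d n) (c₁ / (d n : ℝ) ^ ρ₁))
    (hP2a : Tendsto (fun n : ℕ => Real.log (Real.log ((n : ℝ) + 1)) ^ (2 / ε n) / (d n : ℝ))
      atTop (nhds 0))
    (hP2b : ∃ c₂ : ℝ, 0 < c₂ ∧ ∀ n, 1 ≤ n →
      (d n : ℝ) ≤ c₂ * (((n : ℝ) + 1) / Real.log ((n : ℝ) + 1)) ^ ((1 : ℝ) / 5))
    (hP3 : ∃ ρ₂ : ℝ, 0 < ρ₂ ∧ ∀ n, PropP3 (G n) (d n) (ε n) ρ₂)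
    (hP4 : ∀ δ : ℝ, 0 < δ → ∃ δ' : ℝ, 0 < δ' ∧ ∃ n₀ : ℕ, ∀ n, n₀ ≤ n →
      ∀ S : Finset (Fin (n + 1)), (S.card : ℝ) ≤ δ' * Real.log ((n : ℝ) + 1) →
        (edgesInside (G n) S : ℝ) ≤ δ * (d n : ℝ) * (S.card : ℝ)) :
    ∃ c : ℝ, 0 < c ∧
      Tendsto (fun n =>
        walkProb (lazyStep (G n) (d n)) (u n)
          (Nat.floor (2 * ((1 - ε n) * (((n : ℝ) + 1) * Real.log (d n)))))
          (fun p => bigVacantComponent (G n) p 1 (Real.exp (c * (d n : ℝ) ^ (ε n / 2)))))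
        atTop (nhds 1) := by
  obtain ⟨c₁, ρ₁, hc₁, -, hρ₁, hgap⟩ := hP1
  obtain ⟨c₂, -, hP2⟩ := hP2b
  have ht (n : ℕ) : 0 ≤ 2 * ((1 - ε n) * (((n : ℝ) + 1) * Real.log (d n))) :=
    mul_nonneg two_pos.le (mul_nonneg (sub_nonneg.mpr (hε n).2.le) (by positivity))
  exact ⟨1 / 2, by norm_num, lazy_vacant_giant_component_general G d ε u _ 1 hreg hconn hd hεd
    (fun n => by simpa using Nat.floor_le (ht n)) ⟨c₁, ρ₁, hc₁, hρ₁, hgap⟩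
    ⟨c₂, eventually_atTop.mpr ⟨1, by simpa using hP2⟩⟩ hP3⟩

end
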